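/- arXiv:math/0205134 — 3 statements merged into one kernel-verified Lean document; each statement's English description precedes it below -/
import Mathlib

section
/- Let P and Q be complex polynomials and let a, b be distinct complex numbers with P(a) = P(b). Let d_a (resp. d_b) be the multiplicity of the point a (resp. b) with respect to P, i.e. the multiplicity of a (resp. b) as a root of P − P(a). Suppose that for every integer i ≥ 0 and every integer j with 0 ≤ j ≤ d_a + d_b − 2 the moment ∫_a^b P(z)^i Q(z)^j Q'(z) dz vanishes, i.e. every polynomial S with S' = P^i·Q^j·Q' satisfies S(a) = S(b). Then there exist complex polynomials P̃, Q̃, W such that P = P̃ ∘ W, Q = Q̃ ∘ W, and W(a) = W(b). -/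
open Polynomial

open Differential in
lemma artin_descent {F ι : Type*} [Field F] [Differential F] [Fintype ι] (w v : ι → F)
    (U : Submodule F ((ι → F) × F))
    (hst : ∀ y p, (y, p) ∈ U → ((fun i => (y i)′), p′ + ∑ i, y i * w i) ∈ U)
    (h0 : ∀ p, ((0 : ι → F), p) ∈ U → p = 0)
    (hres : ∀ (c : ι → F) (p : F), (∀ i, (c i)′ = 0) → p′ + ∑ i, c i * w i = 0 →
      ∑ i, c i * v i = 0) :
    ∀ y p, (y, p) ∈ U → ∑ i, y i * v i = 0 := by
  classical
  let supp : (ι → F) → Finset ι := fun y => Finset.univ.filter (fun i => y i ≠ 0)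
  have key : ∀ k : ℕ, ∀ y p, (y, p) ∈ U → (supp y).card = k → ∑ i, y i * v i = 0 := by
    intro k
    induction k using Nat.strong_induction_on with
    | _ k ih =>
      intro y p hy hk
      by_cases hy0 : y = 0
      · simp [hy0]
      have hex : ∃ m, ∃ c p', (c, p') ∈ U ∧ c ≠ 0 ∧ supp c ⊆ supp y ∧ (supp c).card = m :=
        ⟨_, y, p, hy, hy0, subset_rfl, rfl⟩
      obtain ⟨c, p', hc, hc0, hcs, hcm⟩ := Nat.find_spec hex
      have hmin : ∀ c' p'', (c', p'') ∈ U → supp c' ⊂ supp c → c' = 0 := by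
        intro c' p'' hc' hs
        by_contra hne
        exact Nat.find_min hex (m := (supp c').card) (hcm ▸ Finset.card_lt_card hs)
          ⟨c', p'', hc', hne, hs.subset.trans hcs, rfl⟩
      obtain ⟨i0, hi0⟩ : ∃ i, c i ≠ 0 := by
        by_contra h
        push Not at h
        exact hc0 (funext h)

      set e : ι → F := fun i => (c i0)⁻¹ * c i with he
      set pe : F := (c i0)⁻¹ * p' with hpe
      have heU : (e, pe) ∈ U := by
        have := U.smul_mem (c i0)⁻¹ hc
        exact this
      have hei0 : e i0 = 1 := by simp [he, hi0]
      have hesupp : ∀ i, e i ≠ 0 → c i ≠ 0 := by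
        intro i h h'
        exact h (by simp [he, h'])
      have hDe := hst _ _ heU
      have hDe0 : (fun i => (e i)′) = 0 := by
        refine hmin _ _ hDe ?_
        rw [Finset.ssubset_iff_of_subset]
        · exact ⟨i0, by simp [supp, hi0], by simp [supp, hei0]⟩
        · intro i hi
          simp only [supp, Finset.mem_filter, Finset.mem_univ, true_and] at hi ⊢
          intro h
          exact hi (by simp [he, h])
      have hp0 : pe′ + ∑ i, e i * w i = 0 := by
        rw [hDe0] at hDe
        exact h0 _ hDe
      have hev : ∑ i, e i * v i = 0 := hres e pe (fun i => congrFun hDe0 i) hp0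
      have hy' : (y - y i0 • e, p - y i0 * pe) ∈ U := U.sub_mem hy (U.smul_mem (y i0) heU)
      have hi0y : i0 ∈ supp y := hcs (by simp [supp, hi0])
      have hlt : (supp (y - y i0 • e)).card < k := by
        rw [← hk]
        apply Finset.card_lt_card
        rw [Finset.ssubset_iff_of_subset]
        · exact ⟨i0, hi0y, by simp [supp, hei0]⟩
        · intro i hi
          simp only [supp, Finset.mem_filter, Finset.mem_univ, true_and] at hi ⊢
          intro h
          have hcz : c i = 0 := by
            by_contra hci
            have : i ∈ supp y := hcs (by simp [supp, hci])
            simp [supp, h] at this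
          exact hi (by simp [h, he, hcz])
      have := ih _ hlt _ _ hy' rfl
      have h2 : ∑ i, (y - y i0 • e) i * v i = ∑ i, y i * v i - y i0 * ∑ i, e i * v i := by
        rw [Finset.mul_sum, ← Finset.sum_sub_distrib]
        exact Finset.sum_congr rfl (fun i _ => by simp; ring)
      rw [h2, hev] at this
      simpa using this
  exact fun y p h => key _ y p h rfl

open Differential in
lemma deriv_eval_eq' {F : Type*} [Field F] [Differential F] (x : F) (p : F[X]) :
    (p.eval x)′ = (mapCoeffs p).eval x + (derivative p).eval x * x′ := by
  induction p using Polynomial.induction_on' with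
  | add p q hp hq => simp only [eval_add, map_add, hp, hq]; ring
  | monomial n c =>
    simp only [eval_monomial, mapCoeffs_monomial, derivative_monomial, Derivation.leibniz,
      Derivation.leibniz_pow, smul_eq_mul, nsmul_eq_mul]
    ring

/-- The formal integral of a polynomial from `a` to `b`. -/
noncomputable def Jint {F : Type*} [Field F] (a b : F) : F[X] →ₗ[F] F :=
  Polynomial.lsum (fun k => ((b ^ (k + 1) - a ^ (k + 1)) / ((k : F) + 1)) • LinearMap.id)

lemma Jint_monomial {F : Type*} [Field F] (a b : F) (k : ℕ) (c : F) :
    Jint a b (monomial k c) = ((b ^ (k + 1) - a ^ (k + 1)) / ((k : F) + 1)) * c := by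
  simp [Jint, Polynomial.lsum_apply]

lemma Jint_derivative {F : Type*} [Field F] [CharZero F] (a b : F) (S : F[X]) :
    Jint a b (derivative S) = S.eval b - S.eval a := by
  induction S using Polynomial.induction_on' with
  | add p q hp hq => simp only [eval_add, map_add, hp, hq]; ring
  | monomial n c =>
    rw [derivative_monomial, Jint_monomial]
    rcases n with _ | n
    · simp
    · have : ((n : F) + 1) ≠ 0 := by exact_mod_cast Nat.succ_ne_zero n
      simp only [Nat.add_sub_cancel, eval_monomial, Nat.cast_add, Nat.cast_one]
      field_simp

open Differential in
lemma Jint_mapCoeffs {F : Type*} [Field F] [CharZero F] [Differential F] (a b : F)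
    (ha : a′ = 0) (hb : b′ = 0) (S : F[X]) :
    Jint a b (mapCoeffs S) = (Jint a b S)′ := by
  induction S using Polynomial.induction_on' with
  | add p q hp hq => simp only [map_add, hp, hq]
  | monomial n c =>
    rw [mapCoeffs_monomial, Jint_monomial, Jint_monomial, Derivation.leibniz]
    have h1 : ((b ^ (n + 1) - a ^ (n + 1)) / ((n : F) + 1))′ = 0 := by
      have h : ((n : F) + 1)′ = 0 := by
        have := Derivation.map_natCast (Differential.deriv (R := F)) (n + 1)
        simpa using this
      rw [Derivation.leibniz_div]
      simp [Derivation.leibniz_pow, ha, hb]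
    rw [h1]; simp

/-- The polynomials orthogonal to products of G(P) with the derivative of P. -/
def Orth {F : Type*} [Field F] (P : F[X]) (a b : F) (g : F[X]) : Prop :=
  ∀ G : F[X], Jint a b (G.comp P * derivative P * g) = 0

lemma Jint_by_parts {F : Type*} [Field F] [CharZero F] (a b : F) (f g : F[X]) :
    Jint a b (f * derivative g) =
      f.eval b * g.eval b - f.eval a * g.eval a - Jint a b (derivative f * g) := by
  have := Jint_derivative a b (f * g)
  rw [derivative_mul, map_add, eval_mul, eval_mul] at this
  rw [← this]; ring

lemma exists_quot {F : Type*} [Field F] (G P : F[X]) (t : F) :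
    ∃ E : F[X], G = E * (X - C t) + C (G.eval t) ∧
      G.comp P = E.comp P * (P - C t) + C (G.eval t) := by
  have h : (X - C t) ∣ (G - C (G.eval t)) := by
    rw [dvd_iff_isRoot]; simp
  obtain ⟨E, hE⟩ := h
  have h1 : G = E * (X - C t) + C (G.eval t) := by
    rw [sub_eq_iff_eq_add] at hE
    rw [← mul_comm (X - C t)]; exact hE
  refine ⟨E, h1, ?_⟩
  conv_lhs => rw [h1]
  simp

section partB
set_option linter.unusedSectionVars false
variable {F ι : Type*} [Field F] [CharZero F] [Differential F] [Fintype ι]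

/-- The space of pairs to which the descent is applied. -/
def pairSpace (P : F[X]) (a b t : F) (z : ι → F) : Submodule F ((ι → F) × F) where
  carrier := {x | ∃ g A r : F[X], Orth P a b g ∧ A * (P - C t) + r = g * derivative P ∧
    r.degree < Fintype.card ι ∧ (∀ i, x.1 i = g.eval (z i)) ∧ x.2 = Jint a b A}
  add_mem' := by
    rintro x x' ⟨g, A, r, hg, hA, hr, h1, h2⟩ ⟨g', A', r', hg', hA', hr', h1', h2'⟩
    refine ⟨g + g', A + A', r + r', ?_, ?_, ?_, ?_, ?_⟩
    · intro G
      rw [mul_add, map_add, hg, hg', add_zero]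
    · rw [add_mul g, ← hA, ← hA']; ring
    · exact (degree_add_le _ _).trans_lt (max_lt hr hr')
    · intro i; simp [h1, h1']
    · simp [h2, h2']
  zero_mem' := ⟨0, 0, 0, by intro G; simp, by simp, by simp, by simp, by simp⟩
  smul_mem' := by
    rintro c x ⟨g, A, r, hg, hA, hr, h1, h2⟩
    refine ⟨c • g, c • A, c • r, ?_, ?_, ?_, ?_, ?_⟩
    · intro G
      rw [mul_smul_comm, map_smul, hg, smul_zero]
    · rw [smul_mul_assoc c g, ← hA]; simp
    · exact (degree_smul_le _ _).trans_lt hr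
    · intro i; simp [h1]
    · simp [h2]

lemma pairSpace_mem (P : F[X]) (a b t l : F) (z : ι → F) (hl : l ≠ 0)
    (hfac : P - C t = C l * Lagrange.nodal Finset.univ z) (q : F[X]) (hq : Orth P a b q) :
    ∃ p, ((fun i => q.eval (z i)), p) ∈ pairSpace P a b t z := by
  have hne : P - C t ≠ 0 := by
    rw [hfac]; exact mul_ne_zero (C_ne_zero.mpr hl) Lagrange.nodal_ne_zero
  refine ⟨_, q, (q * derivative P) / (P - C t), (q * derivative P) % (P - C t), hq, ?_, ?_,
    fun i => rfl, rfl⟩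
  · rw [mul_comm]; exact EuclideanDomain.div_add_mod _ _
  · have := EuclideanDomain.mod_lt (q * derivative P) hne
    have h2 : (P - C t).degree = Fintype.card ι := by
      rw [hfac, degree_C_mul hl, Lagrange.degree_nodal]; rfl
    rw [← h2]; exact this

lemma pairSpace_zero (P : F[X]) (a b t l : F) (z : ι → F) (hz : Function.Injective z) (hl : l ≠ 0)
    (hfac : P - C t = C l * Lagrange.nodal Finset.univ z)
    (hG : ∀ S : F[X], ∃ G : F[X], G.eval t ≠ 0 ∧ Jint a b (G.comp P * derivative P * S) = 0) :
    ∀ p, ((0 : ι → F), p) ∈ pairSpace P a b t z → p = 0 := by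
  rintro p ⟨g, A, r, hg, hA, hr, h1, h2⟩
  have hne : P - C t ≠ 0 := by
    rw [hfac]; exact mul_ne_zero (C_ne_zero.mpr hl) Lagrange.nodal_ne_zero
  have hdeg : (P - C t).degree = Fintype.card ι := by
    rw [hfac, degree_C_mul hl, Lagrange.degree_nodal]; rfl
  have hdvd : (P - C t) ∣ g := by
    have : Lagrange.nodal Finset.univ z ∣ g := by
      rw [Lagrange.nodal]
      refine Finset.prod_dvd_of_coprime ?_ ?_
      · intro i _ j _ hij
        exact pairwise_coprime_X_sub_C hz hij
      · intro i _
        rw [dvd_iff_isRoot]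
        exact (h1 i).symm
    rw [hfac]
    exact (IsUnit.mul_left_dvd (isUnit_C.mpr hl.isUnit)).mpr this
  obtain ⟨S, hS⟩ := hdvd
  have hr0 : r = 0 := by
    apply eq_zero_of_dvd_of_degree_lt (p := P - C t)
    · have : r = (P - C t) * (S * derivative P - A) := by
        rw [mul_sub, ← mul_assoc, ← hS, ← hA]; ring
      exact ⟨_, this⟩
    · rw [hdeg]; exact hr
  have hAS : A = S * derivative P := by
    apply mul_left_cancel₀ hne
    rw [← mul_assoc, ← hS, ← hA, hr0]; ring
  obtain ⟨G, hGt, hG0⟩ := hG S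
  obtain ⟨E, -, hE⟩ := exists_quot G P t
  have h3 : G.comp P * derivative P * S =
      E.comp P * derivative P * g + (G.eval t) • (S * derivative P) := by
    rw [hE, hS, smul_eq_C_mul]; ring
  rw [h3, map_add, hg E, zero_add, map_smul, smul_eq_mul, ← hAS] at hG0
  have : Jint a b A = 0 := (mul_eq_zero.mp hG0).resolve_left hGt
  rw [← this]; exact h2

lemma interp_eval (P : F[X]) (x t l : F) (z : ι → F) (hz : Function.Injective z) (hl : l ≠ 0)
    (hfac : P - C t = C l * Lagrange.nodal Finset.univ z) (hx : ∀ i, x ≠ z i)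
    (ρ : F[X]) (hρ : ρ.degree < Fintype.card ι) :
    ρ.eval x = ∑ i, ρ.eval (z i) * ((P.eval x - t) / ((x - z i) * (derivative P).eval (z i))) := by
  classical
  have h := Lagrange.eq_interpolate (s := Finset.univ) (v := z) (f := ρ) hz.injOn hρ
  conv_lhs => rw [h]
  rw [Lagrange.eval_interpolate_not_at_node _ (fun i _ => hx i), Finset.mul_sum]
  refine Finset.sum_congr rfl fun i _ => ?_
  rw [Lagrange.nodalWeight_eq_eval_derivative_nodal (Finset.mem_univ i)]
  have h1 : P.eval x - t = l * (Lagrange.nodal Finset.univ z).eval x := by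
    have := congrArg (eval x) hfac
    simpa using this
  have h2 : (derivative P).eval (z i) =
      l * (derivative (Lagrange.nodal Finset.univ z)).eval (z i) := by
    have := congrArg (fun f => (derivative f).eval (z i)) hfac
    simpa using this
  rw [h1, h2]
  have h3 : x - z i ≠ 0 := sub_ne_zero.mpr (hx i)
  by_cases h4 : (derivative (Lagrange.nodal Finset.univ z)).eval (z i) = 0
  · simp [h4]
  · field_simp

lemma deriv_ne_zero_at (P : F[X]) (t l : F) (z : ι → F) (hz : Function.Injective z) (hl : l ≠ 0)
    (hfac : P - C t = C l * Lagrange.nodal Finset.univ z) (i : ι) :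
    (derivative P).eval (z i) ≠ 0 := by
  classical
  have h2 : (derivative P).eval (z i) =
      l * (derivative (Lagrange.nodal Finset.univ z)).eval (z i) := by
    have := congrArg (fun f => (derivative f).eval (z i)) hfac
    simpa using this
  rw [h2]
  refine mul_ne_zero hl ?_
  have h := Lagrange.nodalWeight_ne_zero (s := Finset.univ) (v := z) hz.injOn (Finset.mem_univ i)
  rw [Lagrange.nodalWeight_eq_eval_derivative_nodal (Finset.mem_univ i)] at h
  exact fun h0 => h (by rw [h0, inv_zero])


open Differential in
lemma mapCoeffs_comp (P G : F[X]) (hP : mapCoeffs P = 0) :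
    mapCoeffs (G.comp P) = (mapCoeffs G).comp P := by
  induction G using Polynomial.induction_on' with
  | add p q hp hq => simp only [add_comp, map_add, hp, hq]
  | monomial n c =>
    simp only [monomial_comp, Derivation.leibniz, Derivation.leibniz_pow, hP, mapCoeffs_C,
      mapCoeffs_monomial, smul_zero, zero_add, smul_eq_mul]
    ring

open Differential in
lemma mapCoeffs_derivative (P : F[X]) : mapCoeffs (derivative P) = derivative (mapCoeffs P) := by
  ext n
  simp only [coeff_mapCoeffs, coeff_derivative, Derivation.leibniz, smul_eq_mul]
  have h : ((n : F) + 1)′ = 0 := by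
    have := Derivation.map_natCast (Differential.deriv (R := F)) (n + 1)
    simpa using this
  rw [h]; ring

open Differential in
lemma orth_next (P : F[X]) (a b τ : F) (ha : P.eval a = 0) (hb : P.eval b = 0)
    (ha' : a′ = 0) (hb' : b′ = 0) (hP : mapCoeffs P = 0)
    (Δ M : F[X]) (hM : Δ.comp P = derivative P * M) (hΔ0 : Δ.eval 0 = 0)
    (g : F[X]) (hg : Orth P a b g) :
    Orth P a b (C τ * M * derivative g + mapCoeffs g) := by
  intro G
  rw [mul_add, map_add]
  have e1 : G.comp P * derivative P * (C τ * M * derivative g) =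
      τ • ((G * Δ).comp P * derivative g) := by
    rw [mul_comp, hM, smul_eq_C_mul]; ring
  have e2 : Jint a b ((G * Δ).comp P * derivative g) = 0 := by
    rw [Jint_by_parts, derivative_comp, mul_comm (derivative P), hg]
    simp [ha, hb, hΔ0]
  have e3 : Jint a b (G.comp P * derivative P * mapCoeffs g) = 0 := by
    have h := Jint_mapCoeffs a b ha' hb' (G.comp P * derivative P * g)
    rw [hg G, map_zero, Derivation.leibniz, Derivation.leibniz, mapCoeffs_derivative, hP,
      mapCoeffs_comp P G hP, map_add] at h
    have h2 := hg (mapCoeffs G)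
    simp only [smul_eq_mul, derivative_zero, mul_zero, zero_add] at h
    have h3 : g * (derivative P * (mapCoeffs G).comp P) =
      (mapCoeffs G).comp P * derivative P * g := by ring
    rw [h3, h2, add_zero] at h
    exact h
  rw [e1, map_smul, e2, e3]; simp

open Differential in
lemma pairSpace_stable (P : F[X]) (a b t l : F) (z : ι → F) (hz : Function.Injective z)
    (hl : l ≠ 0) (hfac : P - C t = C l * Lagrange.nodal Finset.univ z)
    (ha : P.eval a = 0) (hb : P.eval b = 0) (ht : t ≠ 0)
    (ha' : a′ = 0) (hb' : b′ = 0) (hP : mapCoeffs P = 0)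
    (Δ M : F[X]) (hM : Δ.comp P = derivative P * M) (hΔ0 : Δ.eval 0 = 0) (hΔt : Δ.eval t ≠ 0) :
    ∀ y p, (y, p) ∈ pairSpace P a b t z →
      ((fun i => (y i)′), p′ + ∑ i, y i * ((z i)′ / (z i - b) - (z i)′ / (z i - a)))
        ∈ pairSpace P a b t z := by
  rintro y p ⟨g, A, r, hg, hA, hr, h1, h2⟩
  simp only at h1 h2
  have hne : P - C t ≠ 0 := by
    rw [hfac]; exact mul_ne_zero (C_ne_zero.mpr hl) Lagrange.nodal_ne_zero
  have hdeg : (P - C t).degree = Fintype.card ι := by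
    rw [hfac, degree_C_mul hl, Lagrange.degree_nodal]; rfl
  have hroot : ∀ i, P.eval (z i) = t := by
    intro i
    have := congrArg (eval (z i)) hfac
    rw [eval_mul, Lagrange.eval_nodal_at_node (Finset.mem_univ i), mul_zero] at this
    simpa [sub_eq_zero] using this
  have hza : ∀ i, a ≠ z i := by
    intro i h; apply ht; rw [← hroot i, ← h, ha]
  have hzb : ∀ i, b ≠ z i := by
    intro i h; apply ht; rw [← hroot i, ← h, hb]
  have hP'z : ∀ i, (derivative P).eval (z i) ≠ 0 := deriv_ne_zero_at P t l z hz hl hfac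
  have hz' : ∀ i, (derivative P).eval (z i) * (z i)′ = t′ := by
    intro i
    have := deriv_eval_eq' (z i) P
    rw [hroot, hP] at this
    simpa using this.symm
  obtain ⟨E, hE1, hE2⟩ := exists_quot Δ P t
  set δ := Δ.eval t with hδ
  have hE0 : E.eval 0 = δ / t := by
    have := congrArg (eval 0) hE1
    rw [hΔ0] at this
    simp at this
    field_simp
    linear_combination this
  set C0 := g / (P - C t) with hC0
  set ρ := g % (P - C t) with hρ
  have hgdec : g = C0 * (P - C t) + ρ := by
    rw [mul_comm]; exact (EuclideanDomain.div_add_mod _ _).symm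
  have hρdeg : ρ.degree < Fintype.card ι := by
    rw [← hdeg]; exact EuclideanDomain.mod_lt g hne
  set A0 := A - C0 * derivative P with hA0
  have hA0eq : A0 * (P - C t) = ρ * derivative P - r := by
    rw [hA0]; linear_combination hA + derivative P * hgdec
  have hP'deg : (derivative P).degree < Fintype.card ι := by
    have := degree_derivative_lt hne
    rw [hdeg] at this
    simpa using this
  have hA0deg : A0.degree < Fintype.card ι := by
    by_contra hcon
    push Not at hcon
    have k1 : (A0 * (P - C t)).degree = A0.degree + Fintype.card ι := by
      rw [degree_mul, hdeg]
    have k2 : (ρ * derivative P - r).degree <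
        ((Fintype.card ι : WithBot ℕ) + (Fintype.card ι : WithBot ℕ)) := by
      refine (degree_sub_le _ _).trans_lt (max_lt ?_ ?_)
      · by_cases hz0 : derivative P = 0
        · rw [hz0, mul_zero, degree_zero]
          exact_mod_cast WithBot.bot_lt_coe _
        · rw [degree_mul]
          refine lt_of_le_of_lt (add_le_add_left hρdeg.le _) ?_
          rw [degree_eq_natDegree hz0] at hP'deg ⊢
          norm_cast at hP'deg ⊢
          omega
      · refine lt_of_lt_of_le hr ?_
        norm_cast
        omega
    rw [← hA0eq, k1] at k2
    exact absurd (lt_of_le_of_lt (add_le_add_left hcon _) k2) (lt_irrefl _)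
  have hg' : derivative g = derivative C0 * (P - C t) + C0 * derivative P + derivative ρ := by
    conv_lhs => rw [hgdec]
    simp [derivative_mul]
  set τ := t′ with hτ
  have hAD : mapCoeffs A * (P - C t) - A * C τ + mapCoeffs r = mapCoeffs g * derivative P := by
    have := congrArg mapCoeffs hA
    rw [map_add, Derivation.leibniz, Derivation.leibniz, mapCoeffs_derivative, map_sub, hP] at this
    simp only [smul_eq_mul, mapCoeffs_C, derivative_zero, mul_zero, zero_add, zero_sub] at this
    linear_combination this
  have hCC : C (τ / δ) * C δ = C τ := by
    rw [← C_mul, div_mul_cancel₀ _ hΔt]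
  refine ⟨C (τ / δ) * M * derivative g + mapCoeffs g,
    C (τ / δ) * (E.comp P * derivative g) + mapCoeffs A + C τ * derivative C0,
    mapCoeffs r + C τ * (derivative ρ - A0), ?_, ?_, ?_, ?_, ?_⟩
  · exact orth_next P a b _ ha hb ha' hb' hP Δ M hM hΔ0 g hg
  · rw [hM] at hE2
    rw [hA0]
    linear_combination hAD + C τ * (-hg') - C (τ / δ) * derivative g * hE2 - derivative g * hCC
  · refine (degree_add_le _ _).trans_lt (max_lt ?_ ?_)
    · rw [degree_lt_iff_coeff_zero] at hr ⊢
      intro m hm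
      rw [coeff_mapCoeffs, hr m hm, map_zero]
    · rw [← smul_eq_C_mul]
      refine (degree_smul_le _ _).trans_lt ((degree_sub_le _ _).trans_lt (max_lt ?_ hA0deg))
      exact (degree_derivative_le).trans_lt hρdeg
  · intro i
    simp only
    rw [h1 i, deriv_eval_eq']
    have hMz : (derivative P).eval (z i) * M.eval (z i) = δ := by
      have := congrArg (eval (z i)) hM
      rw [eval_comp, hroot, eval_mul] at this
      exact this.symm
    have : (z i)′ = τ / δ * M.eval (z i) := by
      rw [← hMz] at hΔt ⊢
      have := hz' i
      have hh := hP'z i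
      have hh2 : eval (z i) M ≠ 0 := right_ne_zero_of_mul hΔt
      field_simp
      linear_combination this
    rw [this]
    simp only [eval_add, eval_mul, eval_C]
    ring
  · simp only
    rw [map_add, map_add, Jint_mapCoeffs a b ha' hb', ← h2, ← smul_eq_C_mul, map_smul,
      ← smul_eq_C_mul, map_smul, Jint_derivative, Jint_by_parts, derivative_comp,
      mul_comm (derivative P), hg, eval_comp, eval_comp, ha, hb, hE0]
    have hsum : ∀ x, P.eval x = 0 → (∀ i, x ≠ z i) →
        τ / t * ρ.eval x = ∑ i, y i * ((z i)′ / (z i - x)) := by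
      intro x hx hxz
      rw [interp_eval P x t l z hz hl hfac hxz ρ hρdeg, Finset.mul_sum]
      refine Finset.sum_congr rfl fun i _ => ?_
      have hyρ : y i = ρ.eval (z i) := by
        rw [h1 i, hgdec]; simp [hroot]
      rw [hyρ, hx, ← hz' i]
      have hh := hP'z i
      have h3 : x - z i ≠ 0 := sub_ne_zero.mpr (hxz i)
      have h4 : z i - x ≠ 0 := sub_ne_zero.mpr (hxz i).symm
      field_simp
      ring
    have hsplit : ∑ i, y i * ((z i)′ / (z i - b) - (z i)′ / (z i - a)) =
        τ / t * ρ.eval b - τ / t * ρ.eval a := by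
      rw [hsum a ha hza, hsum b hb hzb, ← Finset.sum_sub_distrib]
      exact Finset.sum_congr rfl fun i _ => by ring
    have hga : g.eval a = -C0.eval a * t + ρ.eval a := by
      have := congrArg (eval a) hgdec
      simp [ha] at this; rw [this]; ring
    have hgb : g.eval b = -C0.eval b * t + ρ.eval b := by
      have := congrArg (eval b) hgdec
      simp [hb] at this; rw [this]; ring
    rw [hsplit, hga, hgb]
    simp only [smul_eq_mul]
    field_simp
    ring

end partB

/-- The formal derivative on Laurent series. -/
noncomputable def LD : LaurentSeries ℂ →ₗ[ℂ] LaurentSeries ℂ := LaurentSeries.hasseDeriv ℂ 1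

lemma LD_coeff (f : LaurentSeries ℂ) (n : ℤ) : (LD f).coeff n = ((n : ℂ) + 1) * f.coeff (n + 1) := by
  simp [LD]

lemma LD_single_mul (k : ℤ) (f : LaurentSeries ℂ) :
    LD (HahnSeries.single k 1 * f) =
      HahnSeries.single (k - 1) (k : ℂ) * f + HahnSeries.single k 1 * LD f := by
  ext n
  simp only [LD_coeff, HahnSeries.coeff_add, HahnSeries.coeff_single_mul]
  rw [show n - (k - 1) = n + 1 - k by ring, show n - k + 1 = n + 1 - k by ring]
  push_cast
  ring

lemma LD_ofPowerSeries (g : PowerSeries ℂ) :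
    LD (HahnSeries.ofPowerSeries ℤ ℂ g) =
      HahnSeries.ofPowerSeries ℤ ℂ (PowerSeries.derivative ℂ g) := by
  ext n
  rw [LD_coeff]
  rcases n with n | n
  · have h := PowerSeries.coeff_coe g ((n : ℤ) + 1)
    have h' := PowerSeries.coeff_coe (PowerSeries.derivative ℂ g) (n : ℤ)
    simp only [Int.ofNat_eq_natCast]
    rw [h, h']
    have e1 : ¬ ((n : ℤ) + 1 < 0) := by omega
    have e2 : ¬ ((n : ℤ) < 0) := by omega
    have e3 : ((n : ℤ) + 1).natAbs = n + 1 := by omega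
    have e4 : ((n : ℤ)).natAbs = n := by omega
    rw [if_neg e1, if_neg e2, e3, e4]
    simp [PowerSeries.coeff_derivative]
    ring
  · have h := PowerSeries.coeff_coe g (Int.negSucc n + 1)
    have h' := PowerSeries.coeff_coe (PowerSeries.derivative ℂ g) (Int.negSucc n)
    rw [h, h', if_pos (Int.negSucc_lt_zero n)]
    rcases n with _ | n
    · simp
    · rw [if_pos (by omega)]; simp

lemma LD_mul (f h : LaurentSeries ℂ) : LD (f * h) = f * LD h + h * LD f := by
  rw [← LaurentSeries.single_order_mul_powerSeriesPart f,
    ← LaurentSeries.single_order_mul_powerSeriesPart h]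
  set k := f.order
  set l := h.order
  set u := f.powerSeriesPart
  set v := h.powerSeriesPart
  have e : (HahnSeries.single k (1 : ℂ)) * HahnSeries.single l 1 = HahnSeries.single (k + l) 1 := by
    simp
  have e1 : (HahnSeries.single (k - 1) (k : ℂ)) * HahnSeries.single l 1
      = HahnSeries.single (k + l - 1) (k : ℂ) := by
    rw [HahnSeries.single_mul_single]; congr 1 <;> ring_nf
  have e2 : (HahnSeries.single (l - 1) (l : ℂ)) * HahnSeries.single k 1
      = HahnSeries.single (k + l - 1) (l : ℂ) := by
    rw [HahnSeries.single_mul_single]; congr 1 <;> ring_nf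
  have e3 : HahnSeries.single (k + l - 1) (((k + l : ℤ)) : ℂ) = HahnSeries.single (k + l - 1) (k : ℂ)
      + HahnSeries.single (k + l - 1) (l : ℂ) := by
    rw [← HahnSeries.single_add]; push_cast; rfl
  rw [mul_mul_mul_comm, e, ← map_mul, LD_single_mul, LD_single_mul, LD_single_mul,
    LD_ofPowerSeries, LD_ofPowerSeries, LD_ofPowerSeries, e3, ← e1, ← e2, ← e, Derivation.leibniz]
  simp only [map_add, map_mul, smul_eq_mul]
  ring

/-- A `Differential` structure from an additive map with the Leibniz rule. -/
@[reducible]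
def mkDifferential {R : Type*} [CommRing R] (D : R →+ R)
    (h : ∀ f g, D (f * g) = f * D g + g * D f) : Differential R where
  deriv := Derivation.mk' D.toIntLinearMap (fun f g => by simpa using h f g)

noncomputable instance instDiffLaurent : Differential (LaurentSeries ℂ) :=
  mkDifferential LD.toAddMonoidHom LD_mul

section laurent
open Differential

lemma Ldiff_eq (f : LaurentSeries ℂ) : f′ = LD f := rfl

lemma Ldiff_coeff (f : LaurentSeries ℂ) (n : ℤ) :
    (f′).coeff n = ((n : ℂ) + 1) * f.coeff (n + 1) := LD_coeff f n

lemma Ldiff_C (c : ℂ) : (HahnSeries.C c : LaurentSeries ℂ)′ = 0 := by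
  ext n
  rw [Ldiff_coeff, HahnSeries.C_apply]
  by_cases h : n + 1 = 0
  · have : (n : ℂ) + 1 = 0 := by exact_mod_cast h
    simp [this]
  · rw [HahnSeries.coeff_single_of_ne h]; simp

lemma Ldiff_eq_zero (f : LaurentSeries ℂ) (h : f′ = 0) : f = HahnSeries.C (f.coeff 0) := by
  ext n
  rw [HahnSeries.C_apply]
  by_cases hn : n = 0
  · subst hn; simp
  · rw [HahnSeries.coeff_single_of_ne hn]
    have := Ldiff_coeff f (n - 1)
    rw [h] at this
    simp only [HahnSeries.coeff_zero, Int.cast_sub, Int.cast_one, sub_add_cancel] at this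
    have h2 : (n : ℂ) ≠ 0 := by exact_mod_cast hn
    simpa [h2] using this.symm

lemma residue_zero {ι : Type*} [Fintype ι] (w : ι → LaurentSeries ℂ) (c : ι → LaurentSeries ℂ)
    (p : LaurentSeries ℂ) (hc : ∀ i, (c i)′ = 0) (h : p′ + ∑ i, c i * w i = 0) :
    ∑ i, c i * HahnSeries.C ((w i).coeff (-1)) = 0 := by
  have h1 := congrArg (fun f : LaurentSeries ℂ => f.coeff (-1)) h
  simp only [HahnSeries.coeff_add, Ldiff_coeff, HahnSeries.coeff_zero] at h1
  rw [HahnSeries.coeff_sum] at h1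
  have h2 : ∀ i, (c i * w i).coeff (-1) = (c i).coeff 0 * (w i).coeff (-1) := by
    intro i
    conv_lhs => rw [Ldiff_eq_zero _ (hc i)]
    rw [HahnSeries.C_apply, HahnSeries.coeff_single_mul]
    simp
  have h3 : ∀ i, c i * HahnSeries.C ((w i).coeff (-1)) =
      HahnSeries.C ((c i).coeff 0 * (w i).coeff (-1)) := by
    intro i
    conv_lhs => rw [Ldiff_eq_zero _ (hc i)]
    rw [map_mul]
  simp only [h3, h2] at h1 ⊢
  rw [← map_sum]
  simp at h1
  rw [h1, map_zero]

lemma logderiv_residue (f g : PowerSeries ℂ) (k : ℕ) (hf : f = PowerSeries.X ^ k * g)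
    (hg : PowerSeries.constantCoeff g ≠ 0) :
    ((HahnSeries.ofPowerSeries ℤ ℂ f)′ / HahnSeries.ofPowerSeries ℤ ℂ f).coeff (-1) = k := by
  have hu : IsUnit g := by
    rw [PowerSeries.isUnit_iff_constantCoeff]; exact isUnit_iff_ne_zero.mpr hg
  obtain ⟨r, hr⟩ := hu.exists_right_inv
  have hgr : HahnSeries.ofPowerSeries ℤ ℂ g * HahnSeries.ofPowerSeries ℤ ℂ r = 1 := by
    rw [← map_mul, hr, map_one]
  have hg0 : HahnSeries.ofPowerSeries ℤ ℂ g ≠ 0 := left_ne_zero_of_mul_eq_one hgr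
  have hs0 : (HahnSeries.single (k : ℤ) (1 : ℂ)) ≠ 0 := by simp
  have h1 : HahnSeries.ofPowerSeries ℤ ℂ f = HahnSeries.single (k : ℤ) (1 : ℂ) *
      HahnSeries.ofPowerSeries ℤ ℂ g := by
    rw [hf, map_mul, map_pow]
    simp
  have h2 : (HahnSeries.ofPowerSeries ℤ ℂ f)′ / HahnSeries.ofPowerSeries ℤ ℂ f =
      HahnSeries.single (-1 : ℤ) (k : ℂ) +
        HahnSeries.ofPowerSeries ℤ ℂ (PowerSeries.derivative ℂ g * r) := by
    have e1 : HahnSeries.single ((k : ℤ) - 1) (k : ℂ) =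
      HahnSeries.single (k : ℤ) (1 : ℂ) * HahnSeries.single (-1 : ℤ) (k : ℂ) := by
      rw [HahnSeries.single_mul_single]; congr 1; simp
    have e2 : HahnSeries.ofPowerSeries ℤ ℂ r = (HahnSeries.ofPowerSeries ℤ ℂ g)⁻¹ :=
      eq_inv_of_mul_eq_one_right hgr
    rw [Ldiff_eq, h1, LD_single_mul, LD_ofPowerSeries, map_mul, e2]
    have := e1
    simp only [Int.cast_natCast]
    rw [e1]
    field_simp
  rw [h2, HahnSeries.coeff_add, HahnSeries.coeff_single_same, PowerSeries.coeff_coe]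
  simp

lemma hensel_ps (f : Polynomial (PowerSeries ℂ)) (hf : f.Monic) (β : ℂ)
    (h0 : (f.map PowerSeries.constantCoeff).eval β = 0)
    (h1 : (derivative (f.map PowerSeries.constantCoeff)).eval β ≠ 0) :
    ∃ V : PowerSeries ℂ, f.eval V = 0 ∧ PowerSeries.constantCoeff V = β := by
  have H : HenselianRing (PowerSeries ℂ) (Ideal.span {PowerSeries.X}) := inferInstance
  have key : ∀ g : Polynomial (PowerSeries ℂ), PowerSeries.constantCoeff (g.eval (PowerSeries.C β)) =
      (g.map PowerSeries.constantCoeff).eval β := by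
    intro g
    rw [eval_map, ← eval₂_at_apply]; simp
  obtain ⟨V, hV, hV'⟩ := H.is_henselian f hf (PowerSeries.C β) (by
    rw [Ideal.mem_span_singleton, PowerSeries.X_dvd_iff, key, h0]) (by
    apply IsUnit.map
    rw [PowerSeries.isUnit_iff_constantCoeff, key, ← derivative_map]
    exact isUnit_iff_ne_zero.mpr h1)
  refine ⟨V, hV, ?_⟩
  rw [Ideal.mem_span_singleton, PowerSeries.X_dvd_iff] at hV'
  simpa [sub_eq_zero] using hV'

lemma one_root (g : ℂ[X]) (d m : ℕ) (hd : 0 < d) (hm : 0 < m) (β : ℂ) (hβ : β ≠ 0)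
    (hg : β ^ d = g.coeff 0) :
    ∃ V U : PowerSeries ℂ, V * U = 1 ∧ PowerSeries.constantCoeff V = β ∧
      U ^ d * (g.map PowerSeries.C).eval (PowerSeries.X ^ m * U) = 1 := by
  set k := g.natDegree with hk
  let rest : Polynomial (PowerSeries ℂ) :=
    ∑ e ∈ Finset.range (k + 1), monomial (k - e) (PowerSeries.C (g.coeff e) * (PowerSeries.X ^ m) ^ e)
  have hrest : rest.degree < ((d + k : ℕ) : WithBot ℕ) := by
    apply lt_of_le_of_lt (degree_sum_le _ _)
    rw [Finset.sup_lt_iff (WithBot.bot_lt_coe _)]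
    intro e he
    apply lt_of_le_of_lt (degree_monomial_le _ _)
    exact_mod_cast (by omega : k - e < d + k)
  have hmon : (X ^ (d + k) - rest).Monic := monic_X_pow_sub hrest
  have hmap : (X ^ (d + k) - rest).map PowerSeries.constantCoeff
      = X ^ (d + k) - C (g.coeff 0) * X ^ k := by
    rw [Polynomial.map_sub, Polynomial.map_pow, map_X, Polynomial.map_sum]
    congr 1
    rw [Finset.sum_eq_single 0]
    · simp [map_monomial, C_mul_X_pow_eq_monomial]
    · intro e _ he
      rw [map_monomial]
      have : PowerSeries.constantCoeff
        (PowerSeries.C (g.coeff e) * (PowerSeries.X ^ m) ^ e : PowerSeries ℂ) = 0 := by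
        simp [hm.ne', he]
      rw [this, map_zero]
    · simp
  obtain ⟨V, hV, hVβ⟩ := hensel_ps _ hmon β (by
      rw [hmap]; simp [pow_add, hg]) (by
      rw [hmap]
      intro h
      have h2 : β * (derivative (X ^ (d + k) - C (g.coeff 0) * X ^ k)).eval β =
          d * β ^ (d + k) := by
        have e1 : ∀ q : ℕ, β * ((q : ℂ) * β ^ (q - 1)) = q * β ^ q := by
          intro q
          rcases q with _ | q
          · simp
          · simp only [Nat.add_sub_cancel]; ring
        simp only [derivative_sub, derivative_X_pow, derivative_C_mul, eval_sub, eval_mul, eval_C,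
          eval_pow, eval_X, mul_sub, eval_natCast, map_natCast]
        rw [e1, mul_left_comm, e1, ← hg]
        push_cast; ring
      rw [h, mul_zero] at h2
      have : (d : ℂ) * β ^ (d + k) ≠ 0 :=
        mul_ne_zero (by exact_mod_cast hd.ne') (pow_ne_zero _ hβ)
      exact this h2.symm)
  have hu : IsUnit V := by
    rw [PowerSeries.isUnit_iff_constantCoeff, hVβ]; exact isUnit_iff_ne_zero.mpr hβ
  obtain ⟨U, hU⟩ := hu.exists_right_inv
  refine ⟨V, U, hU, hVβ, ?_⟩
  have h3 : rest.eval V = V ^ k * (g.map PowerSeries.C).eval (PowerSeries.X ^ m * U) := by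
    rw [eval_map, eval₂_eq_sum_range, Finset.mul_sum, eval_finsetSum]
    apply Finset.sum_congr rfl
    intro e he
    have he' : e ≤ k := by simpa [Nat.lt_succ_iff] using he
    rw [eval_monomial]
    have : V ^ k * U ^ e = V ^ (k - e) := by
      conv_lhs => rw [← Nat.sub_add_cancel he', pow_add, mul_assoc, ← mul_pow, hU, one_pow, mul_one]
    rw [mul_pow, ← this]
    ring
  rw [eval_sub, h3, eval_pow, eval_X, sub_eq_zero] at hV
  have h4 : (U ^ d * U ^ k) * V ^ (d + k) = 1 := by
    rw [← pow_add, ← mul_pow, mul_comm U, hU, one_pow]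
  rw [hV] at h4
  have h5 : U ^ k * V ^ k = 1 := by rw [← mul_pow, mul_comm U, hU, one_pow]
  calc _ = U ^ d * (U ^ k * V ^ k) * (g.map PowerSeries.C).eval (PowerSeries.X ^ m * U) := by
        rw [h5]; ring
    _ = _ := by rw [← h4]; ring

lemma roots_at (P : ℂ[X]) (hP : P ≠ 0) (α : ℂ) (hα : P.eval α = 0) (N : ℕ) (hN : 0 < N)
    (hdvd : P.rootMultiplicity α ∣ N) :
    ∃ Z : Finset (PowerSeries ℂ), Z.card = P.rootMultiplicity α ∧
      ∀ z ∈ Z, PowerSeries.constantCoeff z = α ∧ (P.map PowerSeries.C).eval z = PowerSeries.X ^ N := by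
  classical
  set d := P.rootMultiplicity α with hd
  have hd0 : 0 < d := (rootMultiplicity_pos hP).mpr hα
  obtain ⟨m, hm⟩ := hdvd
  have hm0 : 0 < m := by rcases Nat.eq_zero_or_pos m with h | h; · simp [h] at hm; omega
                         · exact h
  obtain ⟨q, hq, hq'⟩ := exists_eq_pow_rootMultiplicity_mul_and_not_dvd P hP α
  rw [← hd] at hq
  have hqα : q.eval α ≠ 0 := fun h => hq' (dvd_iff_isRoot.mpr h)
  set g := q.comp (X + C α) with hgdef
  have hg0 : g.coeff 0 = q.eval α := by
    rw [coeff_zero_eq_eval_zero, hgdef, eval_comp]; simp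

  have hsep : (X ^ d - C (q.eval α)).Separable :=
    separable_X_pow_sub_C _ (by exact_mod_cast hd0.ne') hqα
  have hcard : ((X ^ d - C (q.eval α)).roots.toFinset).card = d := by
    rw [Multiset.toFinset_card_of_nodup (nodup_roots hsep),
      IsAlgClosed.card_roots_eq_natDegree, natDegree_X_pow_sub_C]
  have hroot : ∀ β ∈ (X ^ d - C (q.eval α)).roots.toFinset, β ^ d = q.eval α := by
    intro β hβ
    rw [Multiset.mem_toFinset, mem_roots (X_pow_sub_C_ne_zero hd0 _)] at hβ
    simpa [sub_eq_zero] using hβ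
  have hex : ∀ β : ℂ, ∃ V U : PowerSeries ℂ, β ∈ (X ^ d - C (q.eval α)).roots.toFinset →
      (V * U = 1 ∧ PowerSeries.constantCoeff V = β ∧
      U ^ d * (g.map PowerSeries.C).eval (PowerSeries.X ^ m * U) = 1) := by
    intro β
    by_cases hβ : β ∈ (X ^ d - C (q.eval α)).roots.toFinset
    · obtain ⟨V, U, h⟩ := one_root g d m hd0 hm0 β (by
        rintro rfl
        have := hroot _ hβ
        rw [zero_pow hd0.ne'] at this
        exact hqα this.symm) (by rw [hroot _ hβ, hg0])
      exact ⟨V, U, fun _ => h⟩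
    · exact ⟨0, 0, fun h => absurd h hβ⟩
  choose V U hVU using hex
  refine ⟨(X ^ d - C (q.eval α)).roots.toFinset.image
    (fun β => PowerSeries.C α + PowerSeries.X ^ m * U β), ?_, ?_⟩
  · rw [Finset.card_image_of_injOn, hcard]
    intro β hβ β' hβ' h
    simp only [add_right_inj] at h
    have h2 : U β = U β' := mul_left_cancel₀ (pow_ne_zero _ PowerSeries.X_ne_zero) h
    obtain ⟨h3, h4, -⟩ := hVU β hβ
    obtain ⟨h3', h4', -⟩ := hVU β' hβ'
    have : V β = V β' := by
      rw [← h2] at h3'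
      exact mul_right_cancel₀ (right_ne_zero_of_mul_eq_one h3) (h3.trans h3'.symm)
    rw [← h4, ← h4', this]
  · intro z hz
    rw [Finset.mem_image] at hz
    obtain ⟨β, hβ, rfl⟩ := hz
    obtain ⟨h3, h4, h5⟩ := hVU β hβ
    constructor
    · simp [hm0.ne']
    · conv_lhs => rw [hq]
      have : (g.map PowerSeries.C).eval (PowerSeries.X ^ m * U β) =
          (q.map PowerSeries.C).eval (PowerSeries.C α + PowerSeries.X ^ m * U β) := by
        rw [hgdef, Polynomial.map_comp, eval_comp]; simp [add_comm]
      rw [Polynomial.map_mul, eval_mul, ← this]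
      simp only [Polynomial.map_pow, Polynomial.map_sub, map_X, map_C, eval_pow, eval_sub, eval_X,
        eval_C, add_sub_cancel_left]
      rw [mul_pow, mul_assoc, h5, hm]
      ring

lemma exists_Z (P : ℂ[X]) (hP : 0 < P.natDegree) (N : ℕ) (hN : 0 < N)
    (hdvd : ∀ α, P.eval α = 0 → P.rootMultiplicity α ∣ N) :
    ∃ Z : Finset (PowerSeries ℂ),
      P.map PowerSeries.C - C (PowerSeries.X ^ N) =
        C (PowerSeries.C P.leadingCoeff) * ∏ z ∈ Z, (X - C z) := by
  classical
  have hP0 : P ≠ 0 := by rintro rfl; simp at hP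
  have hex : ∀ α : ℂ, ∃ Z : Finset (PowerSeries ℂ), α ∈ P.roots.toFinset → 
      (Z.card = P.rootMultiplicity α ∧
      ∀ z ∈ Z, PowerSeries.constantCoeff z = α ∧
        (P.map PowerSeries.C).eval z = PowerSeries.X ^ N) := by
    intro α
    by_cases h : α ∈ P.roots.toFinset
    · have h' : P.eval α = 0 := by simpa [hP0] using h
      obtain ⟨Z, hZ⟩ := roots_at P hP0 α h' N hN (hdvd α h')
      exact ⟨Z, fun _ => hZ⟩
    · exact ⟨∅, fun h' => absurd h' h⟩
  choose Zf hZf using hex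
  set Z := P.roots.toFinset.biUnion Zf with hZ
  have hcard : Z.card = P.natDegree := by
    rw [hZ, Finset.card_biUnion]
    · rw [← IsAlgClosed.card_roots_eq_natDegree (p := P), ← Multiset.toFinset_sum_count_eq]
      apply Finset.sum_congr rfl
      intro α hα
      rw [(hZf α hα).1, count_roots]
    · intro α hα α' hα' hne
      refine Finset.disjoint_left.mpr ?_
      intro z hz hz'
      exact hne (((hZf α hα).2 z hz).1.symm.trans ((hZf α' hα').2 z hz').1)
  have hCinj : Function.Injective (PowerSeries.C : ℂ →+* PowerSeries ℂ) := RingHom.injective _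
  set f := P.map PowerSeries.C - C (PowerSeries.X ^ N) with hf
  have hdeg : f.natDegree = P.natDegree := by
    rw [hf, natDegree_sub_C, natDegree_map_eq_of_injective hCinj]
  have hlc : f.leadingCoeff = PowerSeries.C P.leadingCoeff := by
    rw [leadingCoeff, hdeg, hf, coeff_sub, coeff_C, if_neg hP.ne', sub_zero, coeff_map]; rfl
  have hf0 : f ≠ 0 := by
    intro h; rw [h] at hdeg; simp at hdeg; omega
  have hsub : Z.val ≤ f.roots := by
    rw [Multiset.le_iff_subset Z.nodup]
    intro z hz
    rw [mem_roots hf0, IsRoot, hf, eval_sub, eval_C, sub_eq_zero]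
    rw [Finset.mem_val, hZ, Finset.mem_biUnion] at hz
    obtain ⟨α, hα, hz⟩ := hz
    exact ((hZf α hα).2 z hz).2
  have hroots : f.roots = Z.val := by
    symm
    apply Multiset.eq_of_le_of_card_le hsub
    rw [Finset.card_val, hcard, ← hdeg]
    exact card_roots' f
  refine ⟨Z, ?_⟩
  rw [← hlc]
  have := C_leadingCoeff_mul_prod_multiset_X_sub_C (p := f) (by
    rw [hroots, Finset.card_val, hcard, hdeg])
  rw [hroots] at this
  exact this.symm

lemma card_Z (P : ℂ[X]) (N : ℕ) (hN : 0 < N) (hP : P ≠ 0) (Z : Finset (PowerSeries ℂ))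
    (hZ : P.map PowerSeries.C - C (PowerSeries.X ^ N) =
        C (PowerSeries.C P.leadingCoeff) * ∏ z ∈ Z, (X - C z)) (α : ℂ) [DecidableEq ℂ] :
    (Z.filter (fun z => PowerSeries.constantCoeff z = α)).card = P.rootMultiplicity α := by
  have h := congrArg (Polynomial.map PowerSeries.constantCoeff) hZ
  rw [Polynomial.map_sub, Polynomial.map_map, map_C, Polynomial.map_mul, map_C,
    Polynomial.map_prod] at h
  have e1 : (PowerSeries.constantCoeff).comp (PowerSeries.C) = RingHom.id ℂ := by
    ext x; simp
  rw [e1, Polynomial.map_id] at h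
  simp only [map_pow, PowerSeries.constantCoeff_X, zero_pow hN.ne', map_zero, sub_zero,
    PowerSeries.constantCoeff_C, Polynomial.map_sub, map_X, map_C] at h
  rw [← count_roots]
  have h2 : P.roots = Z.val.map PowerSeries.constantCoeff := by
    conv_lhs => rw [h]
    rw [roots_C_mul _ (leadingCoeff_ne_zero.mpr hP)]
    have := roots_multiset_prod_X_sub_C (Z.val.map (PowerSeries.constantCoeff (R := ℂ)))
    rw [Multiset.map_map] at this
    exact this
  rw [h2, Multiset.count_map]
  simp only [eq_comm]
  rfl

lemma Jint_map {F : Type*} [Field F] (φ : ℂ →+* F) (a b : ℂ) (S : ℂ[X]) :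
    Jint (φ a) (φ b) (S.map φ) = φ (Jint a b S) := by
  induction S using Polynomial.induction_on' with
  | add p q hp hq => simp only [Polynomial.map_add, map_add, hp, hq]
  | monomial n c => simp [Jint_monomial, map_monomial]

lemma Orth_map {F : Type*} [Field F] (φ : ℂ →+* F) (P q : ℂ[X]) (a b : ℂ)
    (h : ∀ k : ℕ, Jint a b (P ^ k * derivative P * q) = 0) :
    Orth (P.map φ) (φ a) (φ b) (q.map φ) := by
  intro G
  induction G using Polynomial.induction_on' with
  | add p q hp hq => simp only [add_comp, add_mul, map_add, hp, hq, add_zero]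
  | monomial n c =>
    have := Jint_map φ a b (P ^ n * derivative P * q)
    rw [h, map_zero, Polynomial.map_mul, Polynomial.map_mul, Polynomial.map_pow,
      ← derivative_map] at this
    rw [monomial_comp, mul_assoc, mul_assoc, ← smul_eq_C_mul, map_smul, ← mul_assoc, this,
      smul_zero]

lemma exists_G0 (P : ℂ[X]) (a b : ℂ) (n : ℕ) :
    ∃ G : ℂ[X], G ≠ 0 ∧ ∀ j < n, Jint a b (G.comp P * derivative P * X ^ j) = 0 := by
  let L : ℂ[X] →ₗ[ℂ] (Fin n → ℂ) :=
    { toFun := fun G j => Jint a b (G.comp P * derivative P * X ^ (j : ℕ))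
      map_add' := by intro x y; ext j; simp [add_mul]
      map_smul' := by intro c x; ext j; simp [smul_comp] }
  have hni : ¬ Function.Injective L := fun h =>
    Polynomial.not_finite (Module.Finite.of_injective L h)
  rw [← LinearMap.ker_eq_bot, Submodule.eq_bot_iff] at hni
  push Not at hni
  obtain ⟨G, hG, hG0⟩ := hni
  refine ⟨G, hG0, fun j hj => ?_⟩
  have := congrFun (LinearMap.mem_ker.mp hG) ⟨j, hj⟩
  exact this

lemma exists_G {F : Type*} [Field F] (φ : ℂ →+* F) (P : ℂ[X]) (a b : ℂ) (t : F)
    (ht : ∀ G : ℂ[X], G ≠ 0 → (G.map φ).eval t ≠ 0) (S : F[X]) :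
    ∃ G : F[X], G.eval t ≠ 0 ∧
      Jint (φ a) (φ b) (G.comp (P.map φ) * derivative (P.map φ) * S) = 0 := by
  obtain ⟨G, hG0, hG⟩ := exists_G0 P a b (S.natDegree + 1)
  refine ⟨G.map φ, ht G hG0, ?_⟩
  conv_lhs => rw [S.as_sum_range_C_mul_X_pow]
  rw [Finset.mul_sum, map_sum]
  apply Finset.sum_eq_zero
  intro j hj
  have := Jint_map φ a b (G.comp P * derivative P * X ^ j)
  rw [hG j (Finset.mem_range.mp hj), map_zero, Polynomial.map_mul, Polynomial.map_mul,
    Polynomial.map_pow, map_X, Polynomial.map_comp, ← derivative_map] at this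
  rw [mul_left_comm, ← smul_eq_C_mul, map_smul, this, smul_zero]

lemma exists_Delta (P : ℂ[X]) (hP : 0 < P.natDegree) :
    ∃ Δ M : ℂ[X], Δ ≠ 0 ∧ Δ.eval 0 = 0 ∧ Δ.comp P = derivative P * M := by
  have hd : derivative P ≠ 0 := by
    intro h
    have := derivative_eq_zero.mp h
    omega
  let Δ : ℂ[X] := X * ((derivative P).roots.map (fun ζ => X - C (P.eval ζ))).prod
  have hdvd : derivative P ∣ Δ.comp P := by
    have h1 := IsAlgClosed.splits (derivative P)
    have h2 := C_leadingCoeff_mul_prod_multiset_X_sub_C (p := derivative P)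
      IsAlgClosed.card_roots_eq_natDegree
    rw [← h2]
    rw [IsUnit.mul_left_dvd (isUnit_C.mpr (leadingCoeff_ne_zero.mpr hd).isUnit)]
    rw [mul_comp]
    apply Dvd.dvd.mul_left
    rw [multiset_prod_comp, Multiset.map_map]
    apply Multiset.prod_dvd_prod_of_dvd
    intro ζ _
    rw [dvd_iff_isRoot]
    simp
  obtain ⟨M, hM⟩ := hdvd
  refine ⟨Δ, M, ?_, by simp [Δ], hM⟩
  apply mul_ne_zero X_ne_zero
  intro h
  rw [Multiset.prod_eq_zero_iff] at h
  rw [Multiset.mem_map] at h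
  obtain ⟨ζ, -, h⟩ := h
  exact X_sub_C_ne_zero _ h

lemma eval_X_pow_ne (N : ℕ) (hN : 0 < N) (G : ℂ[X]) (hG : G ≠ 0) :
    (G.map PowerSeries.C).eval (PowerSeries.X ^ N) ≠ 0 := by
  have h : (G.map PowerSeries.C).eval (PowerSeries.X ^ N) =
      ((expand ℂ N G : ℂ[X]) : PowerSeries ℂ) := by
    have e := hom_eval₂ G (C : ℂ →+* ℂ[X]) (coeToPowerSeries.ringHom (R := ℂ)) (X ^ N)
    rw [expand_eq_comp_X_pow, eval_map]
    simp only [coeToPowerSeries.ringHom_apply, coe_pow, coe_X] at e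
    rw [comp, e]
    congr 1
    ext x; simp
  rw [h]
  intro h2
  rw [coe_eq_zero_iff, expand_eq_zero hN] at h2
  exact hG h2

lemma logres (z : PowerSeries ℂ) (a : ℂ) (hz : z ≠ PowerSeries.C a) :
    ∃ k : ℕ, ((HahnSeries.ofPowerSeries ℤ ℂ z)′ / (HahnSeries.ofPowerSeries ℤ ℂ z -
      HahnSeries.ofPowerSeries ℤ ℂ (PowerSeries.C a))).coeff (-1) = k ∧
      (0 < k ↔ PowerSeries.constantCoeff z = a) := by
  set f := z - PowerSeries.C a with hf
  have hf0 : f ≠ 0 := sub_ne_zero.mpr hz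
  have hcc : PowerSeries.constantCoeff f.divXPowOrder ≠ 0 := by
    rw [Ne, PowerSeries.constantCoeff_divXPowOrder_eq_zero_iff]; exact hf0
  have hfac := PowerSeries.X_pow_order_mul_divXPowOrder (f := f)
  refine ⟨f.order.toNat, ?_, ?_⟩
  · have := logderiv_residue f f.divXPowOrder f.order.toNat hfac.symm hcc
    rw [hf, map_sub, map_sub, HahnSeries.ofPowerSeries_C, Ldiff_C, sub_zero, ← hf] at this
    rw [HahnSeries.ofPowerSeries_C]; exact this
  · have e : PowerSeries.constantCoeff z - a = PowerSeries.constantCoeff f := by simp [hf]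
    rw [← sub_eq_zero, e]
    conv_rhs => rw [← hfac]
    rw [map_mul, map_pow, PowerSeries.constantCoeff_X]
    simp [hcc, Nat.pos_iff_ne_zero]

lemma vandermonde_pos {R ι : Type*} [CommRing R] [IsDomain R] [CharZero R] [Fintype ι]
    (y : ι → R) (c : ι → ℤ) (M : ℕ)
    (hcard : ∀ D : Finset ι, (∀ i ∈ D, c i ≠ 0) → D.card ≤ M + 1)
    (hs : ∀ k ≤ M, ∑ i, y i ^ k * (c i : R) = 0) (i0 : ι) (hi0 : c i0 < 0) :
    ∃ i, y i = y i0 ∧ 0 < c i := by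
  classical
  set D : Finset ι := Finset.univ.filter (fun i => c i ≠ 0) with hD
  set Y : Finset R := (D.image y).erase (y i0) with hY
  have hYcard : Y.card ≤ M := by
    have h0 : y i0 ∈ D.image y := Finset.mem_image_of_mem _ (by simp [hD, hi0.ne])
    rw [hY, Finset.card_erase_of_mem h0]
    have := (Finset.card_image_le (s := D) (f := y)).trans (hcard D (by simp [hD]))
    omega
  set Λ : R[X] := ∏ u ∈ Y, (X - C u) with hΛ
  have hdeg : Λ.natDegree ≤ M := by
    rw [hΛ, natDegree_prod_of_monic _ _ (fun u _ => monic_X_sub_C u)]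
    simpa using hYcard
  have h1 : ∑ i, Λ.eval (y i) * (c i : R) = 0 := by
    simp only [eval_eq_sum_range, Finset.sum_mul]
    rw [Finset.sum_comm]
    apply Finset.sum_eq_zero
    intro k hk
    have hk' : k ≤ M := by
      have := Finset.mem_range.mp hk; omega
    have := hs k hk'
    simp only [mul_assoc]
    rw [← Finset.mul_sum, this, mul_zero]
  have h2 : ∑ i, Λ.eval (y i) * (c i : R) =
      Λ.eval (y i0) * ((∑ i ∈ Finset.univ.filter (fun i => y i = y i0), c i : ℤ) : R) := by
    push_cast
    rw [Finset.mul_sum, Finset.sum_filter]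
    apply Finset.sum_congr rfl
    intro i _
    split_ifs with h
    · rw [h]
    · by_cases hc : c i = 0
      · simp [hc]
      · have : Λ.eval (y i) = 0 := by
          rw [hΛ, eval_prod]
          apply Finset.prod_eq_zero (i := y i)
          · rw [hY, Finset.mem_erase]
            exact ⟨h, Finset.mem_image_of_mem _ (by simp [hD, hc])⟩
          · simp
        rw [this, zero_mul]
  have h3 : Λ.eval (y i0) ≠ 0 := by
    rw [hΛ, eval_prod, Finset.prod_ne_zero_iff]
    intro u hu
    rw [hY, Finset.mem_erase] at hu
    simpa [sub_eq_zero] using hu.1.symm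
  rw [h2] at h1
  have h4 := (mul_eq_zero.mp h1).resolve_left h3
  rw [Int.cast_eq_zero] at h4
  obtain ⟨i, hi, hpos⟩ := Finset.exists_pos_of_sum_zero_of_exists_nonzero _ h4
    ⟨i0, by simp, hi0.ne⟩
  exact ⟨i, (Finset.mem_filter.mp hi).2, hpos⟩

lemma coincidence (P Q : ℂ[X]) (a b : ℂ) (hab : a ≠ b) (hdeg : 0 < P.natDegree)
    (ha : P.eval a = 0) (hb : P.eval b = 0)
    (hmom : ∀ k ≤ P.rootMultiplicity a + P.rootMultiplicity b - 1, ∀ n : ℕ,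
      Jint a b (P ^ n * derivative P * Q ^ k) = 0) :
    ∃ N : ℕ, 0 < N ∧ ∃ z1 z2 : PowerSeries ℂ, PowerSeries.constantCoeff z1 = a ∧
      PowerSeries.constantCoeff z2 = b ∧
      (P.map PowerSeries.C).eval z1 = PowerSeries.X ^ N ∧
      (P.map PowerSeries.C).eval z2 = PowerSeries.X ^ N ∧
      (Q.map PowerSeries.C).eval z1 = (Q.map PowerSeries.C).eval z2 := by
  classical
  have hP0 : P ≠ 0 := by rintro rfl; simp at hdeg
  set N := P.natDegree.factorial with hNdef
  have hN : 0 < N := Nat.factorial_pos _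
  have hroots : ∀ α, P.eval α = 0 → 0 < P.rootMultiplicity α := fun α h =>
    (rootMultiplicity_pos hP0).mpr h
  obtain ⟨Z, hZ⟩ := exists_Z P hdeg N hN (fun α hα => by
    apply Nat.dvd_factorial (hroots α hα)
    rw [← count_roots]
    exact (Multiset.count_le_card _ _).trans (card_roots' P))
  have hcardZ := card_Z P N hN hP0 Z hZ
  refine ⟨N, hN, ?_⟩
  set ψ : PowerSeries ℂ →+* LaurentSeries ℂ := HahnSeries.ofPowerSeries ℤ ℂ with hψ
  have hψinj : Function.Injective ψ := HahnSeries.ofPowerSeries_injective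
  set φ : ℂ →+* LaurentSeries ℂ := ψ.comp PowerSeries.C with hφ
  haveI hcz1 : CharZero (LaurentSeries ℂ) := charZero_of_injective_ringHom φ.injective
  haveI hcz2 : CharZero (PowerSeries ℂ) :=
    charZero_of_injective_ringHom (PowerSeries.C (R := ℂ)).injective
  have hφD : ∀ c, (φ c)′ = 0 := by
    intro c
    have : φ c = HahnSeries.C c := HahnSeries.ofPowerSeries_C c
    rw [this]; exact Ldiff_C c
  have hmap : ∀ (f : ℂ[X]) (z : PowerSeries ℂ),
      (f.map φ).eval (ψ z) = ψ ((f.map PowerSeries.C).eval z) := by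
    intro f z
    rw [hφ, ← Polynomial.map_map, eval_map_apply]
  set t : LaurentSeries ℂ := ψ (PowerSeries.X ^ N) with ht
  have htr : ∀ G : ℂ[X], G ≠ 0 → (G.map φ).eval t ≠ 0 := by
    intro G hG
    rw [ht, hmap, Ne, map_eq_zero_iff ψ hψinj]
    exact eval_X_pow_ne N hN G hG
  have ht0 : t ≠ 0 := by
    rw [ht, Ne, map_eq_zero_iff ψ hψinj]
    exact pow_ne_zero _ PowerSeries.X_ne_zero
  let z : Z → LaurentSeries ℂ := fun i => ψ i
  have hz : Function.Injective z := fun i j h => Subtype.ext (hψinj h)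
  have hl : φ P.leadingCoeff ≠ 0 := by
    rw [Ne, map_eq_zero_iff φ φ.injective]; exact leadingCoeff_ne_zero.mpr hP0
  have hfac : P.map φ - C t = C (φ P.leadingCoeff) * Lagrange.nodal Finset.univ z := by
    have h := congrArg (Polynomial.map ψ) hZ
    rw [Polynomial.map_sub, Polynomial.map_map, map_C, Polynomial.map_mul, map_C,
      Polynomial.map_prod] at h
    rw [h, Lagrange.nodal]
    congr 1
    rw [← Finset.prod_coe_sort]
    simp [z]
  have hrootZ : ∀ i ∈ Z, (P.map PowerSeries.C).eval i = PowerSeries.X ^ N := by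
    intro i hi
    have h := congrArg (eval i) hZ
    rw [eval_mul, eval_prod, Finset.prod_eq_zero hi (by simp), mul_zero, eval_sub, eval_C,
      sub_eq_zero] at h
    exact h
  have hneC : ∀ i ∈ Z, ∀ α : ℂ, P.eval α = 0 → i ≠ PowerSeries.C α := by
    rintro i hi α hα rfl
    have h := hrootZ _ hi
    rw [eval_map_apply, hα, map_zero] at h
    exact pow_ne_zero N PowerSeries.X_ne_zero h.symm
  have evφ : ∀ α, P.eval α = 0 → (P.map φ).eval (φ α) = 0 := by
    intro α hα
    rw [eval_map_apply, hα, map_zero]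
  obtain ⟨Δ, M, hΔ, hΔ0, hM⟩ := exists_Delta P hdeg
  have hst := pairSpace_stable (P.map φ) (φ a) (φ b) t (φ P.leadingCoeff) z hz hl hfac
    (evφ a ha) (evφ b hb) ht0 (hφD a) (hφD b)
    (by ext n : 1; rw [Differential.coeff_mapCoeffs, coeff_map, hφD, coeff_zero])
    (Δ.map φ) (M.map φ) (by
      rw [← Polynomial.map_comp, hM, Polynomial.map_mul, derivative_map])
    (by rw [← map_zero φ, eval_map_apply, hΔ0]) (htr Δ hΔ)
  have h0 := pairSpace_zero (P.map φ) (φ a) (φ b) t (φ P.leadingCoeff) z hz hl hfac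
    (exists_G φ P a b t htr)
  set w : Z → LaurentSeries ℂ := fun i => (z i)′ / (z i - φ b) - (z i)′ / (z i - φ a) with hw
  have hA := artin_descent w (fun i => HahnSeries.C ((w i).coeff (-1))) _ hst h0
    (fun c p hc h => residue_zero w c p hc h)
  choose ka hka hka' using fun i : Z => logres i a (hneC i i.2 a ha)
  choose kb hkb hkb' using fun i : Z => logres i b (hneC i i.2 b hb)
  let y : Z → PowerSeries ℂ := fun i => (Q.map PowerSeries.C).eval (i : PowerSeries ℂ)
  let c : Z → ℤ := fun i => (kb i : ℤ) - ka i
  have hwc : ∀ i, HahnSeries.C ((w i).coeff (-1)) = ψ (c i : PowerSeries ℂ) := by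
    intro i
    have : (w i).coeff (-1) = ((c i : ℤ) : ℂ) := by
      rw [hw]
      simp only [HahnSeries.coeff_sub, c]
      push_cast
      rw [← hka i, ← hkb i]
      rfl
    rw [this, map_intCast, map_intCast]
  have hs : ∀ k ≤ P.rootMultiplicity a + P.rootMultiplicity b - 1,
      ∑ i, y i ^ k * (c i : PowerSeries ℂ) = 0 := by
    intro k hk
    obtain ⟨p, hp⟩ := pairSpace_mem (P.map φ) (φ a) (φ b) t (φ P.leadingCoeff) z hl hfac
      ((Q ^ k).map φ) (Orth_map φ P (Q ^ k) a b (hmom k hk))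
    have h := hA _ p hp
    apply hψinj
    rw [map_zero, map_sum, ← h]
    apply Finset.sum_congr rfl
    intro i _
    rw [hwc, map_mul, hmap, Polynomial.map_pow, eval_pow]
  have hsgn : ∀ i, (c i < 0 ↔ PowerSeries.constantCoeff (i : PowerSeries ℂ) = a) ∧
      (0 < c i ↔ PowerSeries.constantCoeff (i : PowerSeries ℂ) = b) := by
    intro i
    have h1 := hka' i
    have h2 := hkb' i
    by_cases hia : PowerSeries.constantCoeff (i : PowerSeries ℂ) = a
    · have hib : ¬ PowerSeries.constantCoeff (i : PowerSeries ℂ) = b := fun h => hab (hia ▸ h)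
      simp only [hia, hib, iff_true, iff_false] at h1 h2 ⊢
      have h3 : a ≠ b := hab
      simp only [h3, iff_false] at h2 ⊢
      simp only [c]; omega
    · by_cases hib : PowerSeries.constantCoeff (i : PowerSeries ℂ) = b
      · simp only [hia, hib, iff_true, iff_false] at h1 h2 ⊢
        have h3 : b ≠ a := hab.symm
        simp only [h3, iff_false] at h1 ⊢
        simp only [c]; omega
      · simp only [hia, hib, iff_false] at h1 h2 ⊢
        simp only [c]; omega
  have hda := hroots a ha
  have hdb := hroots b hb
  obtain ⟨i0, hi0⟩ : (Z.filter (fun z => PowerSeries.constantCoeff z = a)).Nonempty := by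
    rw [← Finset.card_pos, hcardZ]; exact hda
  rw [Finset.mem_filter] at hi0
  obtain ⟨i1, hi1, hi1'⟩ := vandermonde_pos y c (P.rootMultiplicity a + P.rootMultiplicity b - 1)
    (by
      intro D hD
      have hsub : D.map (Function.Embedding.subtype _) ⊆
          (Z.filter (fun z => PowerSeries.constantCoeff z = a)) ∪
          (Z.filter (fun z => PowerSeries.constantCoeff z = b)) := by
        intro x hx
        rw [Finset.mem_map] at hx
        obtain ⟨i, hi, rfl⟩ := hx
        rw [Finset.mem_union, Finset.mem_filter, Finset.mem_filter]
        rcases lt_or_gt_of_ne (hD i hi) with h | h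
        · exact Or.inl ⟨i.2, (hsgn i).1.mp h⟩
        · exact Or.inr ⟨i.2, (hsgn i).2.mp h⟩
      have h1 := (Finset.card_le_card hsub).trans (Finset.card_union_le _ _)
      rw [Finset.card_map, hcardZ, hcardZ] at h1
      omega) hs ⟨i0, hi0.1⟩ ((hsgn _).1.mpr hi0.2)
  exact ⟨i0, i1, hi0.2, (hsgn i1).2.mp hi1', hrootZ _ hi0.1, hrootZ _ i1.2, hi1.symm⟩

end laurent

lemma generator_coeff (E : IntermediateField ℂ (RatFunc ℂ)) :
    RatFunc.Luroth.generator E = 0 ∨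
    ∃ n, RatFunc.Luroth.generator E = ((minpoly E (RatFunc.X : RatFunc ℂ)).coeff n : E) := by
  unfold RatFunc.Luroth.generator
  split
  · left; rfl
  · right; exact ⟨_, rfl⟩

lemma comp_of_mem (W P : ℂ[X]) (hW : 0 < W.natDegree)
    (h : algebraMap ℂ[X] (RatFunc ℂ) P ∈
      IntermediateField.adjoin ℂ {algebraMap ℂ[X] (RatFunc ℂ) W}) :
    ∃ Pt : ℂ[X], P = Pt.comp W := by
  rw [IntermediateField.mem_adjoin_simple_iff] at h
  obtain ⟨r, s, hrs⟩ := h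
  have hae : ∀ f : ℂ[X], aeval (algebraMap ℂ[X] (RatFunc ℂ) W) f =
      algebraMap ℂ[X] (RatFunc ℂ) (f.comp W) := by
    intro f
    rw [aeval_algebraMap_apply, aeval_def, comp]
    rfl
  have hinj : Function.Injective (algebraMap ℂ[X] (RatFunc ℂ)) := RatFunc.algebraMap_injective ℂ
  rw [hae, hae] at hrs
  by_cases hs : s = 0
  · subst hs
    simp at hrs
    exact ⟨0, by simp [hrs]⟩
  have hsW : ∀ f : ℂ[X], f ≠ 0 → f.comp W ≠ 0 := by
    intro f hf h
    rw [comp_eq_zero_iff] at h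
    rcases h with h | ⟨-, h⟩
    · exact hf h
    · rw [h] at hW; simp at hW
  have h1 : P * s.comp W = r.comp W := by
    apply hinj
    rw [map_mul, hrs, div_mul_cancel₀]
    rw [Ne, map_eq_zero_iff _ hinj]
    exact hsW s hs
  set g := EuclideanDomain.gcd r s with hg
  obtain ⟨r', hr'⟩ := EuclideanDomain.gcd_dvd_left r s
  obtain ⟨s', hs'⟩ := EuclideanDomain.gcd_dvd_right r s
  have hb := EuclideanDomain.gcd_eq_gcd_ab r s
  rw [← hg] at hr' hs' hb
  set x := EuclideanDomain.gcdA r s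
  set y := EuclideanDomain.gcdB r s
  have hg0 : g ≠ 0 := by
    intro h; rw [h, zero_mul] at hs'; exact hs hs'
  have hcop : r' * x + s' * y = 1 := by
    apply mul_left_cancel₀ hg0
    rw [mul_one, mul_add, ← mul_assoc, ← mul_assoc, ← hr', ← hs']
    exact hb.symm
  have h2 : P * s'.comp W = r'.comp W := by
    apply mul_left_cancel₀ (hsW g hg0)
    rw [mul_left_comm, ← mul_comp, ← mul_comp, ← hr', ← hs', h1]
  have h3 := congrArg (fun f : ℂ[X] => f.comp W) hcop
  simp only [add_comp, mul_comp, one_comp] at h3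
  rw [← h2] at h3
  have hu : IsUnit (s'.comp W) := by
    refine IsUnit.of_mul_eq_one (P * x.comp W + y.comp W) ?_
    rw [← h3]; ring
  have hdeg : (s'.comp W).natDegree = 0 := natDegree_eq_zero_of_isUnit hu
  rw [natDegree_comp] at hdeg
  have hs0 : s'.natDegree = 0 := (mul_eq_zero.mp hdeg).resolve_right hW.ne'
  obtain ⟨c, hc⟩ := natDegree_eq_zero.mp hs0
  have hc0 : c ≠ 0 := by
    rintro rfl
    rw [← hc] at hu
    simp at hu
  refine ⟨C c⁻¹ * r', ?_⟩
  rw [mul_comp, ← h2, ← hc, C_comp, C_comp, mul_left_comm, ← C_mul, inv_mul_cancel₀ hc0]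
  simp

lemma luroth_poly (E : IntermediateField ℂ (RatFunc ℂ)) (P : ℂ[X]) (hP : 0 < P.natDegree)
    (hPE : algebraMap ℂ[X] (RatFunc ℂ) P ∈ E) :
    ∃ W : ℂ[X], 0 < W.natDegree ∧ algebraMap ℂ[X] (RatFunc ℂ) W ∈ E ∧
      E = IntermediateField.adjoin ℂ {algebraMap ℂ[X] (RatFunc ℂ) W} := by
  have hinj : Function.Injective (algebraMap ℂ[X] (RatFunc ℂ)) := RatFunc.algebraMap_injective ℂ
  have hlc : P.leadingCoeff ≠ 0 := leadingCoeff_ne_zero.mpr (by rintro rfl; simp at hP)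
  have hbot : E ≠ ⊥ := by
    rintro rfl
    rw [IntermediateField.mem_bot] at hPE
    obtain ⟨c, hc⟩ := hPE
    rw [IsScalarTower.algebraMap_apply ℂ ℂ[X] (RatFunc ℂ)] at hc
    have := hinj hc
    rw [← this] at hP
    simp at hP

  let p : E := ⟨algebraMap ℂ[X] (RatFunc ℂ) P, hPE⟩
  let u : ℂ[X] := C P.leadingCoeff⁻¹ * P
  have humon : u.Monic := by
    rw [Monic, leadingCoeff_mul, leadingCoeff_C, inv_mul_cancel₀ hlc]
  have hudeg : u.natDegree = P.natDegree := by
    rw [natDegree_C_mul (inv_ne_zero hlc)]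
  have huE : algebraMap ℂ[X] (RatFunc ℂ) u ∈ E := by
    rw [map_mul]
    refine E.mul_mem ?_ hPE
    have : algebraMap ℂ[X] (RatFunc ℂ) (C P.leadingCoeff⁻¹) =
        algebraMap ℂ (RatFunc ℂ) P.leadingCoeff⁻¹ := by
      rw [IsScalarTower.algebraMap_apply ℂ ℂ[X] (RatFunc ℂ)]; rfl
    rw [this]; exact E.algebraMap_mem _
  let fE : Polynomial E := u.map (algebraMap ℂ E) - C ⟨_, huE⟩
  let fR : Polynomial ℂ[X] := u.map C - C u
  have hfR : fR.Monic := by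
    apply (humon.map C).sub_of_left
    apply lt_of_le_of_lt degree_C_le
    rw [← natDegree_pos_iff_degree_pos, (humon.natDegree_map C), hudeg]
    exact hP
  have hmaps : fE.map (algebraMap E (RatFunc ℂ)) = fR.map (algebraMap ℂ[X] (RatFunc ℂ)) := by
    simp only [fE, fR, Polynomial.map_sub, Polynomial.map_map, map_C]
    congr 2
  have hroot : aeval (RatFunc.X : RatFunc ℂ) fE = 0 := by
    rw [aeval_def, ← eval_map, hmaps]
    simp only [fR, Polynomial.map_sub, Polynomial.map_map, map_C, eval_sub, eval_C]
    rw [sub_eq_zero, eval_map]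
    have e := hom_eval₂ u (C : ℂ →+* ℂ[X]) (algebraMap ℂ[X] (RatFunc ℂ)) X
    rw [eval₂_C_X, RatFunc.algebraMap_X] at e
    exact e.symm
  have hinteg : IsIntegral E (RatFunc.X : RatFunc ℂ) := by
    refine ⟨fE, ?_, by simpa [aeval_def] using hroot⟩
    have : (fE.map (algebraMap E (RatFunc ℂ))).Monic := by rw [hmaps]; exact hfR.map _
    exact monic_of_injective (algebraMap E (RatFunc ℂ)).injective this
  have hdvd : (minpoly E (RatFunc.X : RatFunc ℂ)).map (algebraMap E (RatFunc ℂ)) ∣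
      fR.map (algebraMap ℂ[X] (RatFunc ℂ)) := by
    rw [← hmaps]
    exact Polynomial.map_dvd _ (minpoly.dvd E _ hroot)
  obtain ⟨g, hg⟩ := IsIntegrallyClosed.eq_map_mul_C_of_dvd (RatFunc ℂ) hfR hdvd
  rw [((minpoly.monic hinteg).map _).leadingCoeff, C_1, mul_one] at hg
  have hgen := generator_coeff E
  rcases hgen with h0 | ⟨n, hn⟩
  · exact absurd h0 (RatFunc.Luroth.generator_ne_zero hbot)
  · have hW : algebraMap ℂ[X] (RatFunc ℂ) (g.coeff n) = RatFunc.Luroth.generator E := by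
      rw [hn, ← coeff_map, hg, coeff_map]; rfl
    refine ⟨g.coeff n, ?_, ?_, ?_⟩
    · by_contra h
      obtain ⟨c, hc⟩ := natDegree_eq_zero.mp (Nat.eq_zero_of_not_pos h)
      apply RatFunc.Luroth.generator_ne_C hbot
      refine ⟨c, ?_⟩
      rw [← hW, ← hc, RatFunc.algebraMap_C]
    · rw [hW]; exact RatFunc.Luroth.generator_mem
    · rw [hW]; exact RatFunc.Luroth.eq_adjoin_generator

lemma luroth_common (E : IntermediateField ℂ (RatFunc ℂ)) (P Q : ℂ[X]) (hP : 0 < P.natDegree)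
    (hPE : algebraMap ℂ[X] (RatFunc ℂ) P ∈ E) (hQE : algebraMap ℂ[X] (RatFunc ℂ) Q ∈ E) :
    ∃ Pt Qt W : ℂ[X], P = Pt.comp W ∧ Q = Qt.comp W ∧ algebraMap ℂ[X] (RatFunc ℂ) W ∈ E := by
  obtain ⟨W, hW, hWE, hE⟩ := luroth_poly E P hP hPE
  obtain ⟨Pt, h1⟩ := comp_of_mem W P hW (hE ▸ hPE)
  obtain ⟨Qt, h2⟩ := comp_of_mem W Q hW (hE ▸ hQE)
  exact ⟨Pt, Qt, W, h1, h2, hWE⟩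

lemma common_of_coincidence {R : Type*} [CommRing R] [IsDomain R] [Algebra ℂ R] (P Q : ℂ[X])
    (hP : 0 < P.natDegree) (z1 z2 : R) (h1 : aeval z1 P = aeval z2 P)
    (h2 : aeval z1 Q = aeval z2 Q)
    (i1 : Function.Injective (aeval z1 : ℂ[X] →ₐ[ℂ] R))
    (i2 : Function.Injective (aeval z2 : ℂ[X] →ₐ[ℂ] R)) :
    ∃ Pt Qt W : ℂ[X], P = Pt.comp W ∧ Q = Qt.comp W ∧ aeval z1 W = aeval z2 W := by
  let K := FractionRing R
  have hRK : Function.Injective (algebraMap R K) := IsFractionRing.injective R K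
  let e1 : ℂ[X] →ₐ[ℂ] K := (IsScalarTower.toAlgHom ℂ R K).comp (aeval z1)
  let e2 : ℂ[X] →ₐ[ℂ] K := (IsScalarTower.toAlgHom ℂ R K).comp (aeval z2)
  have j1 : Function.Injective e1 := hRK.comp i1
  have j2 : Function.Injective e2 := hRK.comp i2
  let E1 : RatFunc ℂ →ₐ[ℂ] K := IsFractionRing.liftAlgHom (g := e1) j1
  let E2 : RatFunc ℂ →ₐ[ℂ] K := IsFractionRing.liftAlgHom (g := e2) j2
  have hE1 : ∀ f, E1 (algebraMap ℂ[X] (RatFunc ℂ) f) = algebraMap R K (aeval z1 f) := fun f =>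
    IsFractionRing.lift_algebraMap (g := e1.toRingHom) j1 f
  have hE2 : ∀ f, E2 (algebraMap ℂ[X] (RatFunc ℂ) f) = algebraMap R K (aeval z2 f) := fun f =>
    IsFractionRing.lift_algebraMap (g := e2.toRingHom) j2 f
  let E : IntermediateField ℂ (RatFunc ℂ) :=
    { AlgHom.equalizer E1 E2 with
      inv_mem' := by
        intro x hx
        have hx' : E1 x = E2 x := hx
        change E1 x⁻¹ = E2 x⁻¹
        rw [map_inv₀, map_inv₀, hx'] }
  have hmem : ∀ f : ℂ[X], algebraMap ℂ[X] (RatFunc ℂ) f ∈ E ↔ aeval z1 f = aeval z2 f := by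
    intro f
    change E1 _ = E2 _ ↔ _
    rw [hE1, hE2]
    exact hRK.eq_iff
  obtain ⟨Pt, Qt, W, hp, hq, hw⟩ := luroth_common E P Q hP ((hmem P).mpr h1) ((hmem Q).mpr h2)
  exact ⟨Pt, Qt, W, hp, hq, (hmem W).mp hw⟩

lemma exists_antideriv (f : ℂ[X]) : ∃ S : ℂ[X], derivative S = f := by
  induction f using Polynomial.induction_on' with
  | add p q hp hq =>
    obtain ⟨S, hS⟩ := hp
    obtain ⟨T, hT⟩ := hq
    exact ⟨S + T, by rw [derivative_add, hS, hT]⟩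
  | monomial n c =>
    refine ⟨monomial (n + 1) (c / (n + 1)), ?_⟩
    rw [derivative_monomial]
    have : ((n : ℂ) + 1) ≠ 0 := by exact_mod_cast Nat.succ_ne_zero n
    simp only [Nat.add_sub_cancel, Nat.cast_add, Nat.cast_one]
    rw [div_mul_cancel₀ _ this]

lemma moments_shift (P Q : ℂ[X]) (a b : ℂ) (j : ℕ)
    (h : ∀ i : ℕ, ∀ S : ℂ[X], S.derivative = P ^ i * Q ^ j * Q.derivative → S.eval a = S.eval b)
    (G : ℂ[X]) : Jint a b (G.comp P * (Q ^ j * derivative Q)) = 0 := by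
  induction G using Polynomial.induction_on' with
  | add p q hp hq => rw [add_comp, add_mul, map_add, hp, hq, add_zero]
  | monomial n c =>
    obtain ⟨S, hS⟩ := exists_antideriv (P ^ n * Q ^ j * Q.derivative)
    have h1 := Jint_derivative a b S
    rw [hS, h n S hS, sub_self] at h1
    rw [monomial_comp, mul_assoc, ← smul_eq_C_mul, map_smul, ← mul_assoc, h1, smul_zero]

lemma moments_orth (P Q : ℂ[X]) (a b : ℂ) (D : ℕ) (ha : P.eval a = 0) (hb : P.eval b = 0)
    (h : ∀ j ≤ D - 2, ∀ n, Jint a b (P ^ n * (Q ^ j * derivative Q)) = 0) :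
    ∀ k ≤ D - 1, ∀ n : ℕ, Jint a b (P ^ n * derivative P * Q ^ k) = 0 := by
  intro k hk n
  have hn : ((n : ℂ) + 1) ≠ 0 := by exact_mod_cast Nat.succ_ne_zero n
  have h1 := Jint_by_parts a b (P ^ (n + 1)) (Q ^ k)
  have h2 : derivative (P ^ (n + 1)) * Q ^ k = ((n : ℂ) + 1) • (P ^ n * derivative P * Q ^ k) := by
    rw [derivative_pow, smul_eq_C_mul]
    simp only [Nat.add_sub_cancel, Nat.cast_add, Nat.cast_one, map_add, map_one, map_natCast]
    ring
  have h3 : Jint a b (P ^ (n + 1) * derivative (Q ^ k)) = 0 := by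
    rcases k with _ | j
    · simp
    · rw [derivative_pow]
      have e : P ^ (n + 1) * (C (((j + 1 : ℕ)) : ℂ) * Q ^ (j + 1 - 1) * derivative Q) =
          (((j + 1 : ℕ)) : ℂ) • (P ^ (n + 1) * (Q ^ j * derivative Q)) := by
        rw [smul_eq_C_mul, Nat.add_sub_cancel]; ring
      rw [e, map_smul, h j (by omega), smul_zero]
  rw [h3, h2, map_smul] at h1
  simp only [eval_pow, ha, hb] at h1
  simpa [hn] using h1

lemma aeval_ps (f : ℂ[X]) (z : PowerSeries ℂ) :
    aeval z f = (f.map PowerSeries.C).eval z := by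
  rw [aeval_def, eval_map]; rfl

lemma aeval_ps_injective (P : ℂ[X]) (N : ℕ) (hN : 0 < N) (z : PowerSeries ℂ)
    (hz : (P.map PowerSeries.C).eval z = PowerSeries.X ^ N) :
    Function.Injective (aeval z : ℂ[X] →ₐ[ℂ] PowerSeries ℂ) := by
  rw [← transcendental_iff_injective]
  refine (transcendental_aeval_iff (f := P).mp ?_).1
  rw [aeval_ps, hz, transcendental_iff]
  intro G hG
  by_contra h
  rw [aeval_ps] at hG
  exact eval_X_pow_ne N hN G h hG

lemma constantCoeff_aeval (f : ℂ[X]) (z : PowerSeries ℂ) :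
    PowerSeries.constantCoeff (aeval z f) = f.eval (PowerSeries.constantCoeff z) := by
  rw [aeval_def, hom_eval₂, eval]
  congr 1

/-- **Theorem 2** of Pakovich, "On the polynomial moment problem":
if `P a = P b` for distinct `a, b` and all moments
`∫_a^b P^i Q^j Q' dz` vanish for `0 ≤ i` and `0 ≤ j ≤ d_a + d_b - 2`,
where `d_a`, `d_b` are the multiplicities of `a`, `b` with respect to `P`,
then `P = P̃ ∘ W`, `Q = Q̃ ∘ W` with `W a = W b`. -/
theorem polynomial_moment_problem_composition
    (P Q : ℂ[X]) (a b : ℂ) (hab : a ≠ b) (hPab : P.eval a = P.eval b)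
    (hmom : ∀ i j : ℕ,
      j ≤ rootMultiplicity a (P - C (P.eval a)) + rootMultiplicity b (P - C (P.eval b)) - 2 →
      ∀ S : ℂ[X], S.derivative = P ^ i * Q ^ j * Q.derivative → S.eval a = S.eval b) :
    ∃ Pt Qt W : ℂ[X], P = Pt.comp W ∧ Q = Qt.comp W ∧ W.eval a = W.eval b := by
  rcases Nat.eq_zero_or_pos P.natDegree with hdeg | hdeg
  · obtain ⟨c, hc⟩ := natDegree_eq_zero.mp hdeg
    exact ⟨C c, X, Q, by rw [C_comp, hc], by simp, hmom 0 0 (Nat.zero_le _) Q (by simp)⟩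
  set c := P.eval a with hc
  rw [← hPab] at hmom
  set P0 := P - C c with hP0
  have hdeg0 : 0 < P0.natDegree := by rw [hP0, natDegree_sub_C]; exact hdeg
  have ha : P0.eval a = 0 := by simp [hP0, hc]
  have hb : P0.eval b = 0 := by simp [hP0, hPab]
  have hm : ∀ j ≤ rootMultiplicity a P0 + rootMultiplicity b P0 - 2, ∀ n,
      Jint a b (P0 ^ n * (Q ^ j * derivative Q)) = 0 := by
    intro j hj n
    have := moments_shift P Q a b j (fun i => hmom i j hj) ((X - C c) ^ n)
    simpa [hP0] using this
  obtain ⟨N, hN, z1, z2, h1, h2, h3, h4, h5⟩ := coincidence P0 Q a b hab hdeg0 ha hb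
    (moments_orth P0 Q a b _ ha hb hm)
  obtain ⟨Pt, Qt, W, hp, hq, hw⟩ := common_of_coincidence P0 Q hdeg0 z1 z2
    (by rw [aeval_ps, aeval_ps, h3, h4]) (by rw [aeval_ps, aeval_ps, h5])
    (aeval_ps_injective P0 N hN z1 h3) (aeval_ps_injective P0 N hN z2 h4)
  refine ⟨Pt + C c, Qt, W, ?_, hq, ?_⟩
  · rw [add_comp, ← hp, C_comp, hP0]; ring
  · have := congrArg PowerSeries.constantCoeff hw
    rwa [constantCoeff_aeval, constantCoeff_aeval, h1, h2] at this
end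

section
/- Let P and Q be complex polynomials and let a, b be distinct complex numbers with P(a) = P(b). Suppose a and b are not critical points of P, i.e. P'(a) ≠ 0 and P'(b) ≠ 0. Suppose that for every integer i ≥ 0 the moment ∫_a^b P(z)^i Q'(z) dz vanishes, i.e. every polynomial R with R' = P^i·Q' satisfies R(a) = R(b). Then there exist complex polynomials P̃, Q̃, W such that P = P̃ ∘ W, Q = Q̃ ∘ W, and W(a) = W(b). -/
open Polynomial

/-- homogenisation of `A` evaluated at `(u, v)` in degree `N` -/
noncomputable def pmHom (N : ℕ) (A u v : ℂ[X]) : ℂ[X] :=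
  ∑ i ∈ Finset.range (N + 1), C (A.coeff i) * u ^ i * v ^ (N - i)

lemma pmHom_field {L : Type*} [Field L] [Algebra ℂ L] (φ : ℂ[X] →ₐ[ℂ] L) (N : ℕ) (A u v : ℂ[X])
    (hN : A.natDegree ≤ N) (hv : φ v ≠ 0) :
    φ (pmHom N A u v) = aeval (φ u / φ v) A * φ v ^ N := by
  rw [aeval_eq_sum_range' (Nat.lt_succ_of_le hN), Finset.sum_mul, pmHom, map_sum]
  refine Finset.sum_congr rfl fun i hi => ?_
  have hi' : i ≤ N := by simpa [Nat.lt_succ_iff] using hi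
  have hC : φ (C (A.coeff i)) = algebraMap ℂ L (A.coeff i) := by
    rw [← algebraMap_eq]; exact φ.commutes _
  rw [map_mul, map_mul, map_pow, map_pow, hC, Algebra.smul_def, div_pow]
  have : φ v ^ N = φ v ^ i * φ v ^ (N - i) := by rw [← pow_add]; congr 1; omega
  rw [this]
  have := pow_ne_zero i hv
  field_simp

lemma pm_luroth_normal (E : IntermediateField ℂ (RatFunc ℂ)) (hE : E ≠ ⊥) :
    ∃ u v : ℂ[X], v ≠ 0 ∧ IsCoprime u v ∧ v.natDegree < u.natDegree ∧
      E = IntermediateField.adjoin ℂ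
        {algebraMap ℂ[X] (RatFunc ℂ) u / algebraMap ℂ[X] (RatFunc ℂ) v} := by
  set f := RatFunc.Luroth.generator E with hf
  have hEf : E = IntermediateField.adjoin ℂ {f} := RatFunc.Luroth.eq_adjoin_generator
  have hfd : algebraMap ℂ[X] (RatFunc ℂ) f.num / algebraMap ℂ[X] (RatFunc ℂ) f.denom = f :=
    RatFunc.num_div_denom f
  have hcop := RatFunc.isCoprime_num_denom f
  have hv0 := RatFunc.denom_ne_zero f
  have hnc : ¬ ∃ c, f = RatFunc.C c := RatFunc.Luroth.generator_ne_C hE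
  generalize f.num = u at *
  generalize f.denom = v at *
  by_cases hd : v.natDegree < u.natDegree
  · exact ⟨u, v, hv0, hcop, hd, by rw [hfd]; exact hEf⟩
  push Not at hd
  set c := u.coeff v.natDegree / v.leadingCoeff with hc
  have hinj : Function.Injective (algebraMap ℂ[X] (RatFunc ℂ)) := IsFractionRing.injective _ _
  have hv0' : algebraMap ℂ[X] (RatFunc ℂ) v ≠ 0 := by
    simpa using hv0
  have hu' : u - C c * v ≠ 0 := by
    intro h
    apply hnc
    refine ⟨c, ?_⟩
    rw [← hfd, sub_eq_zero.mp h, map_mul, mul_div_assoc, div_self hv0', mul_one]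
    simp
  have hfc : (f - RatFunc.C c)⁻¹ = algebraMap ℂ[X] (RatFunc ℂ) v /
      algebraMap ℂ[X] (RatFunc ℂ) (u - C c * v) := by
    rw [← hfd, map_sub, map_mul, RatFunc.algebraMap_C, div_sub' hv0', inv_div]
    ring_nf
  refine ⟨v, u - C c * v, hu', ?_, ?_, ?_⟩
  · obtain ⟨x, y, h⟩ := hcop
    exact ⟨y + x * C c, x, by rw [← h]; ring⟩
  · have hle : (u - C c * v).natDegree ≤ v.natDegree := by
      refine (natDegree_sub_le _ _).trans (max_le hd (natDegree_C_mul_le _ _))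
    refine lt_of_le_of_ne hle fun h => hu' ?_
    have h2 : (u - C c * v).coeff (u - C c * v).natDegree = 0 := by
      rw [h, coeff_sub, coeff_C_mul, coeff_natDegree, hc, div_mul_cancel₀, sub_self]
      simpa using hv0
    simpa using h2
  · rw [← hfc, hEf]
    have hCm : ∀ F : IntermediateField ℂ (RatFunc ℂ), RatFunc.C c ∈ F := fun F => by
      have := F.algebraMap_mem c
      simpa using this
    apply le_antisymm
    · rw [IntermediateField.adjoin_simple_le_iff]
      have h1 := IntermediateField.mem_adjoin_simple_self ℂ ((f - RatFunc.C c)⁻¹)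
      have h2 := add_mem (inv_mem h1) (hCm _)
      simpa using h2
    · rw [IntermediateField.adjoin_simple_le_iff]
      exact inv_mem (sub_mem (IntermediateField.mem_adjoin_simple_self ℂ f) (hCm _))

lemma pm_luroth_poly (E : IntermediateField ℂ (RatFunc ℂ)) (P : ℂ[X])
    (hP : algebraMap ℂ[X] (RatFunc ℂ) P ∈ E) (hdeg : 0 < P.natDegree) :
    ∃ W : ℂ[X], algebraMap ℂ[X] (RatFunc ℂ) W ∈ E ∧
      ∀ q : ℂ[X], algebraMap ℂ[X] (RatFunc ℂ) q ∈ E → ∃ A : ℂ[X], q = A.comp W := by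
  have hinj : Function.Injective (algebraMap ℂ[X] (RatFunc ℂ)) := IsFractionRing.injective _ _
  have hE : E ≠ ⊥ := by
    rintro rfl
    obtain ⟨c, hc⟩ := IntermediateField.mem_bot.mp hP
    have : P = C c := hinj (by rw [← hc]; simp)
    rw [this] at hdeg
    simp at hdeg
  obtain ⟨u, v, hv, hcop, hd, hEq⟩ := pm_luroth_normal E hE
  set φ : ℂ[X] →ₐ[ℂ] RatFunc ℂ := Algebra.algHom ℂ ℂ[X] (RatFunc ℂ) with hφ
  have hφa : ∀ p, φ p = algebraMap ℂ[X] (RatFunc ℂ) p := fun p => rfl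
  have hφv : φ v ≠ 0 := by rw [hφa]; simpa using hv
  have hnz : ∀ z, v.eval z = 0 → u.eval z ≠ 0 := by
    intro z h1 h2
    obtain ⟨x, y, h⟩ := hcop
    have := congrArg (eval z) h
    simp [h1, h2] at this
  have key : ∀ q : ℂ[X], algebraMap ℂ[X] (RatFunc ℂ) q ∈ E →
      ∃ A : ℂ[X], φ q = aeval (φ u / φ v) A := by
    intro q hq
    rw [hEq, IntermediateField.mem_adjoin_simple_iff] at hq
    obtain ⟨A0, B0, hAB⟩ := hq
    by_cases hq0 : q = 0
    · exact ⟨0, by simp [hq0]⟩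
    have hB0' : aeval (φ u / φ v) B0 ≠ 0 := by
      intro h
      apply hq0
      apply hinj
      rw [hAB]
      change _ / aeval (φ u / φ v) B0 = _
      rw [h]; simp
    have hB0 : B0 ≠ 0 := by rintro rfl; simp at hB0'
    obtain ⟨A, B, hABc, hB', hAB'⟩ : ∃ A B : ℂ[X], IsCoprime A B ∧ aeval (φ u / φ v) B ≠ 0 ∧
        φ q * aeval (φ u / φ v) B = aeval (φ u / φ v) A := by
      have hg : gcd A0 B0 ≠ 0 := by
        intro h; exact hB0 ((gcd_eq_zero_iff _ _).mp h).2
      obtain ⟨A, hA⟩ := gcd_dvd_left A0 B0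
      obtain ⟨B, hB⟩ := gcd_dvd_right A0 B0
      refine ⟨A, B, ?_, ?_, ?_⟩
      · obtain ⟨x, y, h⟩ := exists_gcd_eq_mul_add_mul A0 B0
        refine ⟨x, y, ?_⟩
        apply mul_left_cancel₀ hg
        calc gcd A0 B0 * (x * A + y * B) = (gcd A0 B0 * A) * x + (gcd A0 B0 * B) * y := by ring
          _ = gcd A0 B0 * 1 := by rw [← hA, ← hB, ← h, mul_one]
      · intro h; apply hB0'; rw [hB, map_mul, h, mul_zero]
      · rw [hφa, hAB]
        change aeval (φ u / φ v) A0 / aeval (φ u / φ v) B0 * _ = _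
        have hgg : aeval (φ u / φ v) (gcd A0 B0) ≠ 0 := by
          intro h; apply hB0'; rw [hB, map_mul, h, zero_mul]
        have e1 : aeval (φ u / φ v) A0 = aeval (φ u / φ v) (gcd A0 B0) * aeval (φ u / φ v) A := by
          rw [← map_mul, ← hA]
        have e2 : aeval (φ u / φ v) B0 = aeval (φ u / φ v) (gcd A0 B0) * aeval (φ u / φ v) B := by
          rw [← map_mul, ← hB]
        have hB1 : aeval (φ u / φ v) B ≠ 0 := by
          intro h; apply hB0'; rw [hB, map_mul, h, mul_zero]
        rw [e1, e2]
        field_simp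
    have hBc : B.natDegree = 0 := by
      by_contra hBd
      have hBdeg : B.degree ≠ 0 := fun h => hBd (natDegree_eq_of_degree_eq_some h)
      obtain ⟨β, hβ⟩ := IsAlgClosed.exists_root B hBdeg
      have hdu : (u - C β * v).natDegree = u.natDegree :=
        natDegree_sub_eq_left_of_natDegree_lt (lt_of_le_of_lt (natDegree_C_mul_le _ _) hd)
      obtain ⟨z, hz⟩ := IsAlgClosed.exists_root (u - C β * v) (fun h => by
        have := natDegree_eq_of_degree_eq_some h
        rw [hdu] at this
        have h2 : u.natDegree = 0 := this; omega)
      have hz' : u.eval z = β * v.eval z := by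
        simpa [IsRoot, sub_eq_zero] using hz
      have hvz : v.eval z ≠ 0 := fun h => hnz z h (by rw [hz', h, mul_zero])
      set N := max A.natDegree B.natDegree
      have e : q * pmHom N B u v = pmHom N A u v := by
        apply hinj
        rw [← hφa, ← hφa, map_mul, pmHom_field φ N B u v (le_max_right _ _) hφv,
          pmHom_field φ N A u v (le_max_left _ _) hφv, ← hAB']
        ring
      have e2 := congrArg (aeval z) e
      have hvz' : aeval z v ≠ 0 := by simpa [aeval_def] using hvz
      have hq' : aeval z u / aeval z v = β := by
        rw [div_eq_iff hvz']; simpa [aeval_def] using hz'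
      rw [map_mul, pmHom_field (aeval z) N B u v (le_max_right _ _) hvz',
        pmHom_field (aeval z) N A u v (le_max_left _ _) hvz', hq'] at e2
      have hB1 : aeval β B = 0 := by simpa [aeval_def] using hβ
      rw [hB1] at e2
      have hA1 : aeval β A = 0 := by
        have := e2.symm
        simpa [hvz, hvz'] using this
      obtain ⟨x, y, h⟩ := hABc
      have := congrArg (aeval β) h
      simp only [map_add, map_mul, hA1, hB1] at this
      simp at this
    obtain ⟨c, rfl⟩ := natDegree_eq_zero.mp hBc
    have hc : c ≠ 0 := by rintro rfl; simp at hB'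
    refine ⟨C c⁻¹ * A, ?_⟩
    rw [map_mul, ← hAB', aeval_C, aeval_C, mul_left_comm, ← map_mul, inv_mul_cancel₀ hc]
    simp
  have hvc : v.natDegree = 0 := by
    by_contra hvd
    obtain ⟨z, hz⟩ := IsAlgClosed.exists_root v
      (fun h => hvd (natDegree_eq_of_degree_eq_some h))
    obtain ⟨A, hA⟩ := key P hP
    have hAd : A.natDegree ≠ 0 := by
      intro h
      obtain ⟨c, rfl⟩ := natDegree_eq_zero.mp h
      have : P = C c := hinj (by rw [← hφa, hA]; simp)
      rw [this] at hdeg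
      simp at hdeg
    have e : P * v ^ A.natDegree = pmHom A.natDegree A u v := by
      apply hinj
      rw [← hφa, ← hφa, map_mul, pmHom_field φ _ A u v le_rfl hφv, hA, map_pow]
    have e2 := congrArg (eval z) e
    rw [pmHom, eval_finsetSum, Finset.sum_range_succ, Finset.sum_eq_zero] at e2
    · have hz0 : v.eval z = 0 := hz
      simp [hz0, hAd] at e2
      rcases e2 with h | h
      · exact hAd (by simp [h])
      · exact hnz z hz0 h
    · intro i hi
      have hi' : A.natDegree - i ≠ 0 := by simp at hi; omega
      have hz0 : v.eval z = 0 := hz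
      simp [hz0, hi']
  obtain ⟨c, rfl⟩ := natDegree_eq_zero.mp hvc
  have hc : c ≠ 0 := by rintro rfl; simp at hv
  have hW : φ u / φ (C c) = φ (C c⁻¹ * u) := by
    rw [div_eq_iff hφv, ← map_mul]
    congr 1
    rw [mul_right_comm, ← C_mul, inv_mul_cancel₀ hc, C_1, one_mul]
  refine ⟨C c⁻¹ * u, ?_, ?_⟩
  · rw [← hφa, ← hW, hEq]
    exact IntermediateField.mem_adjoin_simple_self _ _
  · intro q hq
    obtain ⟨A, hA⟩ := key q hq
    refine ⟨A, hinj ?_⟩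
    rw [← hφa, hA, hW, aeval_algHom_apply, ← hφa]
    rfl

lemma pm_split (P : ℂ[X]) (hP : P ≠ 0) (U : Submodule ℂ ℂ[X]) (T : ℂ[X] →ₗ[ℂ] ℂ[X])
    (hTU : ∀ u ∈ U, T u ∈ U) (hTP : ∀ f, P ∣ f → P ∣ T f)
    (h : ∀ u ∈ U, P ∣ T (T u) → P ∣ T u) :
    ∀ u ∈ U, ∃ v ∈ U, ∃ w ∈ U, u = T v + w ∧ P ∣ T w := by
  let π : ℂ[X] →ₗ[ℂ] AdjoinRoot P := (AdjoinRoot.mkₐ P).toLinearMap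
  have hπ : ∀ f, π f = 0 ↔ P ∣ f := fun f => AdjoinRoot.mk_eq_zero
  have : Module.Finite ℂ (AdjoinRoot P) := (AdjoinRoot.powerBasis hP).finite
  let ρ : U →ₗ[ℂ] AdjoinRoot P := π ∘ₗ U.subtype
  have hρ : ∀ u : U, u ∈ LinearMap.ker ρ ↔ P ∣ (u : ℂ[X]) := fun u => by
    rw [LinearMap.mem_ker]; exact hπ _
  have : Module.Finite ℂ (U ⧸ LinearMap.ker ρ) :=
    Module.Finite.equiv (LinearMap.quotKerEquivRange ρ).symm
  let TU : U →ₗ[ℂ] U := T.restrict hTU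
  have hTU' : ∀ u : U, ((TU u : U) : ℂ[X]) = T u := fun u => rfl
  have hle : LinearMap.ker ρ ≤ (LinearMap.ker ρ).comap TU := by
    intro u hu
    rw [Submodule.mem_comap, hρ, hTU']
    exact hTP _ ((hρ u).mp hu)
  let S := (LinearMap.ker ρ).mapQ (LinearMap.ker ρ) TU hle
  have hS : ∀ u : U, S (Submodule.Quotient.mk u) = Submodule.Quotient.mk (TU u) := fun u => rfl
  have hdis : Disjoint (LinearMap.range S) (LinearMap.ker S) := by
    rw [Submodule.disjoint_def]
    rintro _ ⟨x, rfl⟩ hx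
    obtain ⟨u, rfl⟩ := Submodule.Quotient.mk_surjective _ x
    rw [LinearMap.mem_ker, hS, hS, Submodule.Quotient.mk_eq_zero, hρ, hTU', hTU'] at hx
    rw [hS, Submodule.Quotient.mk_eq_zero, hρ, hTU']
    exact h u u.2 hx
  have htop : LinearMap.range S ⊔ LinearMap.ker S = ⊤ :=
    Submodule.eq_top_of_disjoint _ _ (LinearMap.finrank_range_add_finrank_ker S).ge hdis
  intro u hu
  have hmem : (Submodule.Quotient.mk ⟨u, hu⟩ : U ⧸ LinearMap.ker ρ) ∈
      LinearMap.range S ⊔ LinearMap.ker S := by rw [htop]; trivial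
  obtain ⟨y, ⟨x, rfl⟩, z, hz, hyz⟩ := Submodule.mem_sup.mp hmem
  obtain ⟨v, rfl⟩ := Submodule.Quotient.mk_surjective _ x
  obtain ⟨w, rfl⟩ := Submodule.Quotient.mk_surjective _ z
  rw [LinearMap.mem_ker, hS, Submodule.Quotient.mk_eq_zero, hρ, hTU'] at hz
  rw [hS, ← Submodule.Quotient.mk_add, eq_comm, Submodule.Quotient.eq, hρ] at hyz
  have hyz' : P ∣ u - (T v + w) := hyz
  refine ⟨v, v.2, u - T v, U.sub_mem hu (hTU _ v.2), by ring, ?_⟩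
  have : u - T v = (u - (T v + w)) + w := by ring
  rw [this, map_add]
  exact dvd_add (hTP _ hyz') hz

lemma pm_deriv_pow (c : ℂ) (m : ℕ) (p : ℂ[X]) :
    (X - C c) * derivative ((X - C c) ^ m * p) =
      (X - C c) ^ m * ((m : ℂ[X]) * p + (X - C c) * derivative p) := by
  rw [derivative_mul, derivative_X_sub_C_pow]
  cases m with
  | zero => simp
  | succ n => simp only [Nat.add_sub_cancel, map_natCast]; ring

lemma pm_g_zero (P g d : ℂ[X]) (hP : P ≠ 0) (hg : derivative P * g = d.comp P * P)
    (c : ℂ) (hc : P.eval c = 0) : g.eval c = 0 := by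
  obtain ⟨p, hp, hpc⟩ := exists_eq_pow_rootMultiplicity_mul_and_not_dvd P hP c
  have hm : 0 < rootMultiplicity c P := (rootMultiplicity_pos hP).mpr hc
  generalize rootMultiplicity c P = m at *
  have hL : (X - C c) ^ m ≠ 0 := pow_ne_zero _ (X_sub_C_ne_zero c)
  have e : (X - C c) ^ m * (((m : ℂ[X]) * p + (X - C c) * derivative p) * g) =
      (X - C c) ^ m * (d.comp P * p * (X - C c)) := by
    rw [← mul_assoc, ← pm_deriv_pow, ← hp, mul_assoc, hg]
    nth_rewrite 2 [hp]
    ring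
  have e2 := congrArg (eval c) (mul_left_cancel₀ hL e)
  have hpc' : p.eval c ≠ 0 := fun h => hpc (dvd_iff_isRoot.mpr h)
  simp [hpc', hm.ne'] at e2
  exact e2

lemma pm_local (P g d : ℂ[X]) (hP : P ≠ 0) (hg : derivative P * g = d.comp P * P)
    (hd : d.eval 0 = 1) (κ : ℤ) (u : ℂ[X]) (h : P ∣ g * derivative u - C (κ : ℂ) * u)
    (hu : κ ≠ 0 ∨ ∀ c, P.eval c = 0 → u.eval c = 0) : P ∣ u := by
  by_cases hu0 : u = 0
  · simp [hu0]
  classical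
  rw [IsAlgClosed.dvd_iff_roots_le_roots hP hu0, Multiset.le_iff_count]
  intro c
  rw [count_roots, count_roots]
  by_contra hlt
  push Not at hlt
  obtain ⟨p, hp, hpc⟩ := exists_eq_pow_rootMultiplicity_mul_and_not_dvd P hP c
  obtain ⟨w, hw, hwc⟩ := exists_eq_pow_rootMultiplicity_mul_and_not_dvd u hu0 c
  have hPc : P.eval c = 0 := (rootMultiplicity_pos hP).mp (by omega)
  generalize rootMultiplicity c P = m at *
  generalize rootMultiplicity c u = j at *
  have hpc' : p.eval c ≠ 0 := fun h => hpc (dvd_iff_isRoot.mpr h)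
  have hwc' : w.eval c ≠ 0 := fun h => hwc (dvd_iff_isRoot.mpr h)
  obtain ⟨s, hs⟩ := h
  have hL : (X - C c) ^ (m + j) ≠ 0 := pow_ne_zero _ (X_sub_C_ne_zero c)
  have h1 : (X - C c) * derivative P =
      (X - C c) ^ m * ((m : ℂ[X]) * p + (X - C c) * derivative p) := by
    conv_lhs => rw [hp]
    exact pm_deriv_pow _ _ _
  have h2 : (X - C c) * derivative u =
      (X - C c) ^ j * ((j : ℂ[X]) * w + (X - C c) * derivative w) := by
    conv_lhs => rw [hw]
    exact pm_deriv_pow _ _ _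
  have hmj : (X - C c) ^ m = (X - C c) ^ j * ((X - C c) * (X - C c) ^ (m - j - 1)) := by
    rw [← pow_succ', ← pow_add]; congr 1; omega
  have e0 : d.comp P * P * ((X - C c) * derivative u)
      - C (κ : ℂ) * ((X - C c) * derivative P) * u = ((X - C c) * derivative P) * (P * s) := by
    rw [← hs, ← hg]; ring
  rw [h1, h2] at e0
  have e : (X - C c) ^ (m + j) * (d.comp P * p * ((j : ℂ[X]) * w + (X - C c) * derivative w)
      - C (κ : ℂ) * ((m : ℂ[X]) * p + (X - C c) * derivative p) * w) =
      (X - C c) ^ (m + j) * (((m : ℂ[X]) * p + (X - C c) * derivative p) * 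
        (((X - C c) * (X - C c) ^ (m - j - 1)) * p * s)) := by
    calc _ = d.comp P * ((X - C c) ^ m * p) * ((X - C c) ^ j * ((j : ℂ[X]) * w + (X - C c) * derivative w))
      - C (κ : ℂ) * ((X - C c) ^ m * ((m : ℂ[X]) * p + (X - C c) * derivative p)) * ((X - C c) ^ j * w) := by ring
      _ = (X - C c) ^ m * ((m : ℂ[X]) * p + (X - C c) * derivative p) * (((X - C c) ^ m * p) * s) := by
        rw [← hp, ← hw]; exact e0
      _ = _ := by
        nth_rewrite 2 [hmj]
        ring
  have e2 := congrArg (eval c) (mul_left_cancel₀ hL e)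
  simp only [eval_sub, eval_mul, eval_comp, hPc, hd, eval_add, eval_natCast, eval_X, eval_C,
    sub_self, zero_mul, mul_zero, add_zero, one_mul] at e2
  have e3 : ((j : ℂ) - κ * m) * (p.eval c * w.eval c) = 0 := by rw [← e2]; ring
  have e4 : (j : ℂ) - κ * m = 0 := by
    rcases mul_eq_zero.mp e3 with h | h
    · exact h
    · exact absurd h (mul_ne_zero hpc' hwc')
  have e5 : (j : ℤ) = κ * m := by
    have : (j : ℂ) = κ * m := sub_eq_zero.mp e4
    exact_mod_cast this
  by_cases hκ : κ = 0
  · have hj : j = 0 := by rw [hκ] at e5; omega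
    rcases hu with h | h
    · exact h hκ
    · have := h c hPc
      rw [hw, hj] at this
      simp at this
      exact hwc' this
  · rcases lt_or_gt_of_ne hκ with h | h
    · nlinarith
    · nlinarith

lemma pm_prod_dvd (s : Multiset ℂ) (f g : ℂ → ℂ[X]) (h : ∀ e, f e ∣ g e) :
    (s.map f).prod ∣ (s.map g).prod := by
  induction s using Multiset.induction_on with
  | empty => simp
  | cons e s ih => simpa using mul_dvd_mul (h e) ih

lemma pm_exists (P : ℂ[X]) (hP' : derivative P ≠ 0) :
    ∃ g d : ℂ[X], derivative P * g = d.comp P * P ∧ d.eval 0 = 1 := by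
  have hP : P ≠ 0 := by rintro rfl; simp at hP'
  obtain ⟨P1, hP1⟩ := gcd_dvd_left P (derivative P)
  obtain ⟨E, hE⟩ := gcd_dvd_right P (derivative P)
  have hE0 : E ≠ 0 := by rintro rfl; rw [mul_zero] at hE; exact hP' hE
  have hroot : ∀ e ∈ E.roots, P.eval e ≠ 0 := by
    intro e he hPe
    have he' : (X - C e) ∣ E := dvd_iff_isRoot.mpr (isRoot_of_mem_roots he)
    have hm : 0 < rootMultiplicity e P := (rootMultiplicity_pos hP).mpr hPe
    have hm' : rootMultiplicity e (derivative P) = rootMultiplicity e P - 1 :=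
      derivative_rootMultiplicity_of_root hPe
    have hdvd : (X - C e) ^ (rootMultiplicity e P - 1) ∣ gcd P (derivative P) := by
      apply dvd_gcd
      · exact (pow_dvd_pow _ (Nat.sub_le _ _)).trans (pow_rootMultiplicity_dvd P e)
      · rw [← hm']; exact pow_rootMultiplicity_dvd _ e
    have h2 : (X - C e) ^ (rootMultiplicity e P - 1 + 1) ∣ derivative P := by
      rw [hE, pow_succ]; exact mul_dvd_mul hdvd he'
    have := (le_rootMultiplicity_iff hP').mpr h2
    omega
  set d0 : ℂ[X] := (E.roots.map (fun e => X - C (P.eval e))).prod with hd0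
  have hd00 : d0.eval 0 ≠ 0 := by
    rw [hd0, eval_multiset_prod, Multiset.map_map]
    apply Multiset.prod_ne_zero
    intro h
    obtain ⟨e, he, h⟩ := Multiset.mem_map.mp h
    simp at h
    exact hroot e he h
  have hdv : E ∣ d0.comp P := by
    have h1 : (E.roots.map (fun e => X - C e)).prod ∣ d0.comp P := by
      rw [hd0, multiset_prod_comp, Multiset.map_map]
      apply pm_prod_dvd
      intro e
      simp only [Function.comp, sub_comp, X_comp, C_comp]
      exact dvd_iff_isRoot.mpr (by simp)
    have h2 := (IsAlgClosed.splits E).eq_prod_roots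
    rw [h2]
    have hu : IsUnit (C E.leadingCoeff) := by
      rw [isUnit_C]; exact (leadingCoeff_ne_zero.mpr hE0).isUnit
    exact (hu.mul_left_dvd).mpr h1
  obtain ⟨h, hh⟩ := hdv
  refine ⟨C (d0.eval 0)⁻¹ * (P1 * h), C (d0.eval 0)⁻¹ * d0, ?_, ?_⟩
  · rw [mul_comp, C_comp, hh]
    conv_lhs => rw [hE]
    conv_rhs => rw [mul_assoc]; arg 2; arg 2; rw [hP1]
    ring
  · simp [hd00]

lemma pm_antideriv (f : ℂ[X]) : ∃ R : ℂ[X], derivative R = f := by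
  induction f using Polynomial.induction_on' with
  | add p q hp hq =>
    obtain ⟨R, rfl⟩ := hp
    obtain ⟨S, rfl⟩ := hq
    exact ⟨R + S, by simp⟩
  | monomial n a =>
    refine ⟨monomial (n + 1) (a / (n + 1)), ?_⟩
    rw [derivative_monomial]
    have : ((n : ℂ) + 1) ≠ 0 := by exact_mod_cast Nat.succ_ne_zero n
    simp [this]

lemma pm_J (a b : ℂ) : ∃ J : ℂ[X] →ₗ[ℂ] ℂ, ∀ f, J (derivative f) = f.eval b - f.eval a := by
  obtain ⟨s, hs⟩ := LinearMap.exists_rightInverse_of_surjective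
    (derivative : ℂ[X] →ₗ[ℂ] ℂ[X]) (LinearMap.range_eq_top.mpr pm_antideriv)
  refine ⟨(leval b - leval a) ∘ₗ s, fun f => ?_⟩
  have h1 : derivative (s (derivative f)) = derivative f := by
    have := LinearMap.congr_fun hs (derivative f)
    simpa using this
  have h2 : derivative (s (derivative f) - f) = 0 := by simp [h1]
  obtain ⟨c, hc⟩ := natDegree_eq_zero.mp (derivative_eq_zero.mp h2)
  have h3 : s (derivative f) = f + C c := by rw [hc]; ring
  simp [h3]

lemma pm_noeth (P : ℂ[X]) (hP : 0 < P.natDegree) (U : ℕ → Submodule ℂ ℂ[X]) (hmono : Monotone U)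
    (hPU : ∀ k f, f ∈ U k → P * f ∈ U k) : ∃ K, ∀ k, U k ≤ U K := by
  let S := Algebra.adjoin ℂ {P}
  have hP0 : P ≠ 0 := by rintro rfl; simp at hP
  have hlc : P.leadingCoeff ≠ 0 := leadingCoeff_ne_zero.mpr hP0
  have hft : Algebra.FiniteType ℂ S :=
    (Subalgebra.fg_iff_finiteType _).mp ⟨{P}, by simp [S]⟩
  have hnr : IsNoetherianRing S := Algebra.FiniteType.isNoetherianRing ℂ S
  have hft2 : Algebra.FiniteType S ℂ[X] :=
    Algebra.FiniteType.of_restrictScalars_finiteType ℂ S ℂ[X]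
  have hX : IsIntegral S (X : ℂ[X]) := by
    set Pn : ℂ[X] := C P.leadingCoeff⁻¹ * P with hPn
    have hmon : Pn.Monic := by simp [Monic, hPn, hlc]
    have hmem : Pn ∈ S := by
      rw [hPn, ← smul_eq_C_mul]
      exact S.smul_mem (Algebra.subset_adjoin rfl) _
    have hdeg : 0 < Pn.natDegree := by
      rw [hPn, natDegree_C_mul (inv_ne_zero hlc)]; exact hP
    refine ⟨Pn.map (algebraMap ℂ S) - C ⟨Pn, hmem⟩, ?_, ?_⟩
    · apply (hmon.map _).sub_of_left
      rw [hmon.degree_map]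
      exact lt_of_le_of_lt degree_C_le (natDegree_pos_iff_degree_pos.mp hdeg)
    · rw [eval₂_sub, eval₂_map, eval₂_C, ← IsScalarTower.algebraMap_eq]
      have : eval₂ (algebraMap ℂ ℂ[X]) X Pn = Pn := by
        rw [algebraMap_eq, eval₂_C_X]
      rw [this]
      exact sub_self _
  have hint : Algebra.IsIntegral S ℂ[X] := by
    constructor
    intro f
    have hC : ∀ c : ℂ, IsIntegral S (C c : ℂ[X]) := fun c => by
      have : (C c : ℂ[X]) = algebraMap S ℂ[X] (algebraMap ℂ S c) := by
        rw [← IsScalarTower.algebraMap_apply]; rfl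
      rw [this]; exact isIntegral_algebraMap
    induction f using Polynomial.induction_on' with
    | add p q hp hq => exact hp.add hq
    | monomial n c =>
      rw [← C_mul_X_pow_eq_monomial]
      exact (hC c).mul (hX.pow n)
  have hfin : Module.Finite S ℂ[X] := Algebra.IsIntegral.finite
  have hN : IsNoetherian S ℂ[X] := inferInstance
  have hsm : ∀ k (s : S) f, f ∈ U k → (s : ℂ[X]) * f ∈ U k := by
    intro k s f hf
    obtain ⟨s, hs⟩ := s
    change s * f ∈ U k
    induction hs using Algebra.adjoin_induction generalizing f with
    | mem x hx => rw [Set.mem_singleton_iff] at hx; rw [hx]; exact hPU k f hf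
    | algebraMap r => rw [← Algebra.smul_def]; exact (U k).smul_mem r hf
    | add x y _ _ hx hy => rw [add_mul]; exact (U k).add_mem (hx f hf) (hy f hf)
    | mul x y _ _ hx hy => rw [mul_assoc]; exact hx _ (hy f hf)
  let V : ℕ →o Submodule S ℂ[X] :=
    { toFun := fun k =>
        { carrier := U k
          add_mem' := fun hx hy => (U k).add_mem hx hy
          zero_mem' := (U k).zero_mem
          smul_mem' := fun s f hf => hsm k s f hf }
      monotone' := fun i j hij f hf => hmono hij hf }
  obtain ⟨K, hK⟩ := monotone_stabilizes_iff_noetherian.mpr hN V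
  refine ⟨K, fun k f hf => ?_⟩
  have h1 : f ∈ U (max K k) := hmono (le_max_right _ _) hf
  have h2 : f ∈ V (max K k) := h1
  rw [← hK _ (le_max_left _ _)] at h2
  exact h2

lemma pm_hensel (P : ℂ[X]) (a : ℂ) (ha : P.eval a = 0) (ha' : (derivative P).eval a ≠ 0) :
    ∃ φ : PowerSeries ℂ, aeval φ P = (PowerSeries.X : PowerSeries ℂ) ∧
      PowerSeries.constantCoeff φ = a := by
  have hP0 : P ≠ 0 := by rintro rfl; simp at ha'
  have hPd : 0 < P.natDegree := by
    by_contra h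
    obtain ⟨c, rfl⟩ := natDegree_eq_zero.mp (by omega : P.natDegree = 0)
    simp at ha'
  have hlc : P.leadingCoeff ≠ 0 := leadingCoeff_ne_zero.mpr hP0
  set l := P.leadingCoeff⁻¹ with hl
  have hl0 : l ≠ 0 := inv_ne_zero hlc
  set Pn : ℂ[X] := C l * P with hPn
  have hmon : Pn.Monic := by simp [Monic, hPn, hl, hlc]
  have hdeg : 0 < Pn.natDegree := by
    rw [hPn, natDegree_C_mul hl0]; exact hPd
  let A := PowerSeries ℂ
  let f : A[X] := Pn.map (algebraMap ℂ A) - C (algebraMap ℂ A l * PowerSeries.X)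
  have hH := (inferInstance : HenselianRing A (Ideal.span {(PowerSeries.X : A)}))
  have hfe : ∀ x : A, f.eval x = algebraMap ℂ A l * (aeval x P - PowerSeries.X) := by
    intro x
    have h1 : f.eval x = aeval x Pn - algebraMap ℂ A l * PowerSeries.X := by
      change eval x (Pn.map (algebraMap ℂ A) - C (algebraMap ℂ A l * PowerSeries.X)) = _
      rw [eval_sub, eval_C, eval_map_algebraMap]
    rw [h1, hPn, map_mul, aeval_C]
    ring
  have hev : ∀ q : ℂ[X], aeval (algebraMap ℂ A a) q = algebraMap ℂ A (q.eval a) := by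
    intro q
    rw [aeval_algebraMap_apply]
    simp [aeval_def]
  obtain ⟨φ, hφ, hφa⟩ := hH.is_henselian f (by
      apply (hmon.map _).sub_of_left
      rw [hmon.degree_map]
      exact lt_of_le_of_lt degree_C_le (natDegree_pos_iff_degree_pos.mp hdeg))
    (algebraMap ℂ A a) (by
      rw [hfe, hev, ha, map_zero, zero_sub]
      exact Ideal.mul_mem_left _ _ (neg_mem (Ideal.mem_span_singleton_self _))) (by
      apply IsUnit.map
      have : (derivative f).eval (algebraMap ℂ A a) =
          algebraMap ℂ A (l * (derivative P).eval a) := by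
        change eval _ (derivative (Pn.map (algebraMap ℂ A)
          - C (algebraMap ℂ A l * PowerSeries.X))) = _
        rw [derivative_sub, derivative_C, sub_zero, derivative_map, eval_map_algebraMap, hev, hPn,
          derivative_C_mul, eval_C_mul]
      rw [this]
      exact (IsUnit.mk0 _ (mul_ne_zero hl0 ha')).map _)
  refine ⟨φ, ?_, ?_⟩
  · have h1 : f.eval φ = 0 := hφ
    rw [hfe] at h1
    have hu : IsUnit (algebraMap ℂ A l) := (IsUnit.mk0 _ hl0).map _
    exact sub_eq_zero.mp (hu.mul_right_eq_zero.mp h1)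
  · rw [Ideal.mem_span_singleton] at hφa
    have := PowerSeries.X_dvd_iff.mp hφa
    rw [map_sub, sub_eq_zero] at this
    rw [this]
    simp [A]

lemma pm_theta_coeff (G dd : PowerSeries ℂ) (hdd : PowerSeries.constantCoeff dd = 1) (j : ℕ)
    (h : ∀ i < j, PowerSeries.coeff i G = 0) :
    PowerSeries.coeff j (dd * (PowerSeries.X * PowerSeries.derivative ℂ G)) =
      (j : ℂ) * PowerSeries.coeff j G := by
  obtain ⟨H, rfl⟩ := PowerSeries.X_pow_dvd_iff.mpr h
  have e : dd * (PowerSeries.X * PowerSeries.derivative ℂ (PowerSeries.X ^ j * H)) =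
      PowerSeries.X ^ j * (dd * ((j : PowerSeries ℂ) * H +
        PowerSeries.X * PowerSeries.derivative ℂ H)) := by
    rw [Derivation.leibniz, Derivation.leibniz_pow]
    simp only [smul_eq_mul, PowerSeries.derivative_X, nsmul_eq_mul]
    cases j with
    | zero => simp
    | succ n => simp only [Nat.add_sub_cancel]; ring
  rw [e]
  have hc : ∀ K : PowerSeries ℂ, PowerSeries.coeff j (PowerSeries.X ^ j * K) =
      PowerSeries.constantCoeff K := by
    intro K
    rw [PowerSeries.coeff_X_pow_mul']; simp
  rw [hc, hc]
  simp [hdd]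

lemma pm_theta_series (P g d : ℂ[X]) (hg : derivative P * g = d.comp P * P)
    (φ : PowerSeries ℂ) (hφ : aeval φ P = (PowerSeries.X : PowerSeries ℂ)) (f : ℂ[X]) :
    aeval φ (g * derivative f) = aeval (PowerSeries.X : PowerSeries ℂ) d *
      (PowerSeries.X * PowerSeries.derivative ℂ (aeval φ f)) := by
  have h1 : ∀ q : ℂ[X], PowerSeries.derivative ℂ (aeval φ q) =
      aeval φ (derivative q) * PowerSeries.derivative ℂ φ := fun q => by
    rw [Derivation.map_aeval, smul_eq_mul]
  have h2 : aeval φ (derivative P) * PowerSeries.derivative ℂ φ = 1 := by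
    rw [← h1, hφ, PowerSeries.derivative_X]
  have h3 := congrArg (aeval φ) hg
  rw [map_mul, map_mul, aeval_comp, hφ] at h3
  rw [h1, map_mul]
  calc aeval φ g * aeval φ (derivative f)
      = (aeval φ (derivative P) * PowerSeries.derivative ℂ φ) * aeval φ g * aeval φ (derivative f) := by
        rw [h2, one_mul]
    _ = (aeval φ (derivative P) * aeval φ g) * (aeval φ (derivative f) * PowerSeries.derivative ℂ φ) := by ring
    _ = _ := by rw [h3]; ring

lemma pm_lambda (P g d : ℂ[X]) (hP : P ≠ 0) (hg : derivative P * g = d.comp P * P)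
    (hd : d.eval 0 = 1) (U : Submodule ℂ ℂ[X])
    (hθ : ∀ u ∈ U, g * derivative u ∈ U) (hsat : ∀ u, P * u ∈ U → u ∈ U)
    (κ : ℤ) (hκ : κ ≠ 0) (l : ℂ[X] →ₗ[ℂ] ℂ) (hlP : ∀ u ∈ U, l (P * u) = 0)
    (hlθ : ∀ u ∈ U, l (g * derivative u) = κ * l u) : ∀ u ∈ U, l u = 0 := by
  intro u hu
  let T : ℂ[X] →ₗ[ℂ] ℂ[X] := LinearMap.mulLeft ℂ g ∘ₗ derivative - (κ : ℂ) • LinearMap.id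
  have hT : ∀ f, T f = g * derivative f - C (κ : ℂ) * f := fun f => by
    simp [T, smul_eq_C_mul]
  have hloc : ∀ f, P ∣ T f → P ∣ f := fun f hf =>
    pm_local P g d hP hg hd κ f (by rw [← hT]; exact hf) (Or.inl hκ)
  have hTU : ∀ u ∈ U, T u ∈ U := fun u hu => by
    rw [hT, ← smul_eq_C_mul]
    exact U.sub_mem (hθ u hu) (U.smul_mem _ hu)
  obtain ⟨v, hv, w, hw, huv, hPw⟩ := pm_split P hP U T hTU (by
    rintro _ ⟨f, rfl⟩
    rw [hT, derivative_mul]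
    have : g * (derivative P * f + P * derivative f) - C (κ : ℂ) * (P * f) =
        P * (d.comp P * f + g * derivative f - C (κ : ℂ) * f) := by
      linear_combination f * hg
    rw [this]
    exact dvd_mul_right _ _) (fun u _ h => hloc _ h) u hu
  obtain ⟨w1, rfl⟩ := hloc w hPw
  rw [huv, map_add, hlP w1 (hsat w1 hw), hT, map_sub, hlθ v hv, ← smul_eq_C_mul, map_smul]
  simp

lemma pm_core (P : ℂ[X]) (a b : ℂ) (hPa : P.eval a = 0) (hPb : P.eval b = 0)
    (ha : (derivative P).eval a ≠ 0)
    (J : ℂ[X] →ₗ[ℂ] ℂ) (hJ : ∀ f, J (derivative f) = f.eval b - f.eval a)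
    (φa φb : PowerSeries ℂ) (hφa : aeval φa P = (PowerSeries.X : PowerSeries ℂ))
    (hφb : aeval φb P = (PowerSeries.X : PowerSeries ℂ))
    (hφa0 : PowerSeries.constantCoeff φa = a) (hφb0 : PowerSeries.constantCoeff φb = b)
    (Q : ℂ[X]) (hmom : ∀ i : ℕ, J (P ^ i * derivative P * Q) = 0) :
    aeval φa Q = aeval φb Q := by
  have hP' : derivative P ≠ 0 := by intro h; rw [h] at ha; simp at ha
  have hP : P ≠ 0 := by rintro rfl; simp at hP'
  have hPd : 0 < P.natDegree := by
    by_contra h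
    obtain ⟨c, rfl⟩ := natDegree_eq_zero.mp (by omega : P.natDegree = 0)
    simp at hP'
  obtain ⟨g, d, hg, hd⟩ := pm_exists P hP'
  let m : ℕ → ℂ[X] →ₗ[ℂ] ℂ := fun i => J ∘ₗ LinearMap.mulLeft ℂ (P ^ i * derivative P)
  have hm : ∀ i f, m i f = J (P ^ i * derivative P * f) := fun i f => rfl
  have hmP : ∀ i f, m i (P * f) = m (i + 1) f := fun i f => by
    rw [hm, hm]; congr 1; ring
  let U : ℕ → Submodule ℂ ℂ[X] := fun k =>
    { carrier := {f | ∀ i, k ≤ i → m i f = 0}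
      add_mem' := fun {x y} hx hy i hi => by rw [map_add, hx i hi, hy i hi, add_zero]
      zero_mem' := fun i _ => map_zero _
      smul_mem' := fun c x hx i hi => by rw [map_smul, hx i hi, smul_zero] }
  have hU : ∀ k f, f ∈ U k ↔ ∀ i, k ≤ i → m i f = 0 := fun k f => Iff.rfl
  have hUmono : Monotone U := fun i j hij f hf k hk => hf k (hij.trans hk)
  have hUP : ∀ k f, f ∈ U k → P * f ∈ U k := fun k f hf i hi => by
    rw [hmP]; exact hf _ (by omega)
  have hUsat : ∀ k f, P * f ∈ U k → f ∈ U (k + 1) := fun k f hf i hi => by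
    obtain ⟨i, rfl⟩ : ∃ i', i = i' + 1 := ⟨i - 1, by omega⟩
    rw [← hmP]; exact hf _ (by omega)
  have hA : ∀ k f, f ∈ U k → ∀ q : ℂ[X], J (P ^ k * q.comp P * derivative P * f) = 0 := by
    intro k f hf q
    induction q using Polynomial.induction_on' with
    | add p q hp hq =>
      rw [add_comp, mul_add, add_mul, add_mul, map_add, hp, hq, add_zero]
    | monomial n c =>
      have : P ^ k * (monomial n c).comp P * derivative P * f =
          c • (P ^ (k + n) * derivative P * f) := by
        rw [monomial_comp, smul_eq_C_mul]; ring
      rw [this, map_smul, ← hm, hf _ (by omega), smul_zero]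
  have hB : ∀ k f, f ∈ U (k + 1) → ∀ q : ℂ[X],
      J (P ^ k * q.comp P * derivative P * f) = q.eval 0 * m k f := by
    intro k f hf q
    have e : P ^ k * q.comp P * derivative P * f =
        P ^ (k + 1) * (divX q).comp P * derivative P * f +
          (q.eval 0) • (P ^ k * derivative P * f) := by
      conv_lhs => rw [← divX_mul_X_add q]
      rw [add_comp, mul_comp, X_comp, C_comp, smul_eq_C_mul, coeff_zero_eq_eval_zero]; ring
    rw [e, map_add, map_smul, hA _ f hf, zero_add, ← hm, smul_eq_mul]
  have hparts : ∀ u f : ℂ[X], J (u * derivative f) =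
      u.eval b * f.eval b - u.eval a * f.eval a - J (derivative u * f) := by
    intro u f
    have := hJ (u * f)
    rw [derivative_mul, map_add, eval_mul, eval_mul] at this
    rw [← this]; ring
  have hmθ : ∀ k f, m k (g * derivative f) =
      - J (P ^ k * (C ((k : ℂ) + 1) * d + X * derivative d).comp P * derivative P * f) := by
    intro k f
    have e1 : P ^ k * derivative P * (g * derivative f) =
        (P ^ (k + 1) * d.comp P) * derivative f := by
      linear_combination P ^ k * derivative f * hg
    rw [hm, e1, hparts]
    simp only [eval_mul, eval_pow, hPa, hPb]
    have e2 : derivative (P ^ (k + 1) * d.comp P) * f =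
        P ^ k * (C ((k : ℂ) + 1) * d + X * derivative d).comp P * derivative P * f := by
      rw [derivative_mul, derivative_pow_succ, derivative_comp]
      simp only [add_comp, mul_comp, C_comp, X_comp]
      ring
    rw [e2]; simp
  have hθU : ∀ k f, f ∈ U k → g * derivative f ∈ U k := by
    intro k f hf i hi
    rw [hmθ, hA i f (hUmono hi hf), neg_zero]
  obtain ⟨K, hK⟩ := pm_noeth P hPd U hUmono hUP
  have hsat : ∀ u, P * u ∈ U K → u ∈ U K := fun u hu => hK _ (hUsat K u hu)
  have hK0 : ∀ k, U K ≤ U k → U K ≤ U 0 := by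
    intro k
    induction k with
    | zero => exact id
    | succ k ih =>
      intro h
      apply ih
      intro f hf i hi
      rcases Nat.eq_or_lt_of_le hi with rfl | hlt
      · refine pm_lambda P g d hP hg hd (U K) (hθU K) hsat (-((k : ℤ) + 1)) (by omega) (m k)
          (fun u hu => ?_) (fun u hu => ?_) f hf
        · rw [hmP]; exact h hu _ le_rfl
        · rw [hmθ, hB k u (h hu)]
          simp [hd]
          ring
      · exact h hf i hlt
  have hK0' : U K ≤ U 0 := hK0 K le_rfl
  let ev : ℂ[X] →ₗ[ℂ] PowerSeries ℂ := (aeval φa).toLinearMap - (aeval φb).toLinearMap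
  have hev : ∀ f, ev f = aeval φa f - aeval φb f := fun f => rfl
  have hca : ∀ f : ℂ[X], PowerSeries.constantCoeff (aeval φa f) = f.eval a := fun f => by
    have h := hom_eval₂ f (algebraMap ℂ (PowerSeries ℂ)) PowerSeries.constantCoeff φa
    rw [hφa0] at h
    rw [aeval_def, h]
    have : PowerSeries.constantCoeff.comp (algebraMap ℂ (PowerSeries ℂ)) = RingHom.id ℂ := by
      ext; simp
    rw [this, eval₂_id]
  have hcb : ∀ f : ℂ[X], PowerSeries.constantCoeff (aeval φb f) = f.eval b := fun f => by
    have h := hom_eval₂ f (algebraMap ℂ (PowerSeries ℂ)) PowerSeries.constantCoeff φb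
    rw [hφb0] at h
    rw [aeval_def, h]
    have : PowerSeries.constantCoeff.comp (algebraMap ℂ (PowerSeries ℂ)) = RingHom.id ℂ := by
      ext; simp
    rw [this, eval₂_id]
  have hga := pm_g_zero P g d hP hg
  have hF0 : ∀ u ∈ U K, u.eval a = u.eval b := by
    intro u hu
    let T : ℂ[X] →ₗ[ℂ] ℂ[X] := LinearMap.mulLeft ℂ g ∘ₗ derivative
    have hT : ∀ f, T f = g * derivative f := fun f => rfl
    obtain ⟨v, hv, w, hw, huv, R, hR⟩ := pm_split P hP (U K) T (hθU K) (by
      rintro _ ⟨f, rfl⟩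
      rw [hT, derivative_mul]
      have : g * (derivative P * f + P * derivative f) =
          P * (d.comp P * f + g * derivative f) := by
        linear_combination f * hg
      rw [this]
      exact dvd_mul_right _ _) (fun u _ h => pm_local P g d hP hg hd 0 (T u)
        (by simpa [hT] using h) (Or.inr fun c hc => by rw [hT, eval_mul, hga c hc, zero_mul])) u hu
    have hRU : R ∈ U K := hsat R (by rw [← hR]; exact hθU K w hw)
    have hPR : derivative P * R = d.comp P * derivative w := by
      apply mul_left_cancel₀ hP
      rw [hT] at hR
      linear_combination (- derivative P) * hR + derivative w * hg
    have h0 : m 0 R = 0 := hK0' hRU 0 le_rfl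
    rw [hm, pow_zero, one_mul, hPR, hparts, derivative_comp] at h0
    have h1 := hA 0 w (hK0' hw) (derivative d)
    rw [pow_zero, one_mul, mul_comm ((derivative d).comp P)] at h1
    rw [h1, eval_comp, eval_comp, hPa, hPb, hd] at h0
    have h2 : w.eval a = w.eval b := by linear_combination -h0
    rw [huv, hT, eval_add, eval_add, eval_mul, eval_mul, hga a hPa, hga b hPb, h2]
    ring
  have hdd : PowerSeries.constantCoeff (aeval (PowerSeries.X : PowerSeries ℂ) d) = 1 := by
    have h := hom_eval₂ d (algebraMap ℂ (PowerSeries ℂ)) PowerSeries.constantCoeff PowerSeries.X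
    rw [aeval_def, h]
    have : PowerSeries.constantCoeff.comp (algebraMap ℂ (PowerSeries ℂ)) = RingHom.id ℂ := by
      ext; simp
    rw [this, eval₂_id, PowerSeries.constantCoeff_X, hd]
  have hFj : ∀ j : ℕ, ∀ u ∈ U K, PowerSeries.coeff j (ev u) = 0 := by
    intro j
    induction j using Nat.strong_induction_on with
    | _ j ih =>
      rcases Nat.eq_zero_or_pos j with rfl | hj
      · intro u hu
        rw [PowerSeries.coeff_zero_eq_constantCoeff_apply, hev, map_sub, hca, hcb, hF0 u hu,
          sub_self]
      · refine pm_lambda P g d hP hg hd (U K) (hθU K) hsat (j : ℤ) (by omega)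
          (PowerSeries.coeff j ∘ₗ ev) (fun u hu => ?_) (fun u hu => ?_)
        · have : ev (P * u) = PowerSeries.X * ev u := by
            rw [hev, hev, map_mul, map_mul, hφa, hφb]; ring
          obtain ⟨i, rfl⟩ : ∃ i, j = i + 1 := ⟨j - 1, by omega⟩
          rw [LinearMap.comp_apply, this, PowerSeries.coeff_succ_X_mul]
          exact ih i (by omega) u hu
        · have : ev (g * derivative u) = aeval (PowerSeries.X : PowerSeries ℂ) d *
              (PowerSeries.X * PowerSeries.derivative ℂ (ev u)) := by
            rw [hev, hev, pm_theta_series P g d hg φa hφa, pm_theta_series P g d hg φb hφb,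
              map_sub]
            ring
          rw [LinearMap.comp_apply, LinearMap.comp_apply, this,
            pm_theta_coeff _ _ hdd j (fun i hi => ih i hi u hu)]
          simp
  have hQ : Q ∈ U K := hK 0 (fun i _ => hmom i)
  rw [← sub_eq_zero, ← hev]
  ext j
  rw [hFj j Q hQ, map_zero]

lemma pm_main0 (P Q : ℂ[X]) (a b : ℂ) (hPa : P.eval a = 0) (hPb : P.eval b = 0)
    (ha : (derivative P).eval a ≠ 0) (hb : (derivative P).eval b ≠ 0)
    (J : ℂ[X] →ₗ[ℂ] ℂ) (hJ : ∀ f, J (derivative f) = f.eval b - f.eval a)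
    (hmom : ∀ i : ℕ, J (P ^ i * derivative P * Q) = 0) :
    ∃ Pt Qt W : ℂ[X], P = Pt.comp W ∧ Q = Qt.comp W ∧ W.eval a = W.eval b := by
  obtain ⟨φa, hφa, hφa0⟩ := pm_hensel P a hPa ha
  obtain ⟨φb, hφb, hφb0⟩ := pm_hensel P b hPb hb
  have hQ := pm_core P a b hPa hPb ha J hJ φa φb hφa hφb hφa0 hφb0 Q hmom
  have hPd : 0 < P.natDegree := by
    by_contra h
    obtain ⟨c, rfl⟩ := natDegree_eq_zero.mp (by omega : P.natDegree = 0)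
    simp at ha
  let L := FractionRing (PowerSeries ℂ)
  have hιinj : Function.Injective (algebraMap (PowerSeries ℂ) L) := IsFractionRing.injective _ _
  have hinj : ∀ φ : PowerSeries ℂ, aeval φ P = (PowerSeries.X : PowerSeries ℂ) →
      Function.Injective (aeval φ : ℂ[X] →ₐ[ℂ] PowerSeries ℂ) := by
    intro φ hφ
    rw [injective_iff_map_eq_zero]
    intro f hf
    by_contra hf0
    have hsp := (IsAlgClosed.splits f).eq_prod_roots
    rw [hsp, map_mul, aeval_C, map_multiset_prod, Multiset.map_map] at hf
    rcases mul_eq_zero.mp hf with h | h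
    · have := (map_eq_zero_iff _ (FaithfulSMul.algebraMap_injective ℂ (PowerSeries ℂ))).mp h
      exact hf0 (leadingCoeff_eq_zero.mp this)
    · rw [Multiset.prod_eq_zero_iff, Multiset.mem_map] at h
      obtain ⟨c, -, hc⟩ := h
      simp only [Function.comp, map_sub, aeval_X, aeval_C] at hc
      rw [sub_eq_zero.mp hc, aeval_algebraMap_apply] at hφ
      have := congrArg (PowerSeries.coeff 1) hφ
      simp at this
  have hnz : ∀ φ : PowerSeries ℂ, aeval φ P = (PowerSeries.X : PowerSeries ℂ) →
      nonZeroDivisors ℂ[X] ≤ (nonZeroDivisors L).comap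
        ((Algebra.algHom ℂ (PowerSeries ℂ) L).comp (aeval φ)) := by
    intro φ hφ f hf
    rw [Submonoid.mem_comap, mem_nonZeroDivisors_iff_ne_zero]
    have hf0 := nonZeroDivisors.ne_zero hf
    intro h
    apply hf0
    apply hinj φ hφ
    apply hιinj
    rw [map_zero, map_zero]
    exact h
  let ψa : RatFunc ℂ →ₐ[ℂ] L := RatFunc.liftAlgHom _ (hnz φa hφa)
  let ψb : RatFunc ℂ →ₐ[ℂ] L := RatFunc.liftAlgHom _ (hnz φb hφb)
  have hψa : ∀ f : ℂ[X], ψa (algebraMap ℂ[X] (RatFunc ℂ) f) = algebraMap (PowerSeries ℂ) L (aeval φa f) := by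
    intro f
    have := RatFunc.liftAlgHom_apply_div _ (hnz φa hφa) f 1
    simp only [map_one, div_one] at this
    exact this
  have hψb : ∀ f : ℂ[X], ψb (algebraMap ℂ[X] (RatFunc ℂ) f) = algebraMap (PowerSeries ℂ) L (aeval φb f) := by
    intro f
    have := RatFunc.liftAlgHom_apply_div _ (hnz φb hφb) f 1
    simp only [map_one, div_one] at this
    exact this
  let E : IntermediateField ℂ (RatFunc ℂ) :=
    (AlgHom.equalizer ψa ψb).toIntermediateField (fun x hx => by
      rw [AlgHom.mem_equalizer] at hx ⊢
      rw [map_inv₀, map_inv₀, hx])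
  have hE : ∀ f : ℂ[X], algebraMap ℂ[X] (RatFunc ℂ) f ∈ E ↔ aeval φa f = aeval φb f := by
    intro f
    have : algebraMap ℂ[X] (RatFunc ℂ) f ∈ E ↔
        ψa (algebraMap ℂ[X] (RatFunc ℂ) f) = ψb (algebraMap ℂ[X] (RatFunc ℂ) f) := Iff.rfl
    rw [this, hψa, hψb]
    exact hιinj.eq_iff
  have hPE := (hE P).mpr (by rw [hφa, hφb])
  obtain ⟨W, hW, hall⟩ := pm_luroth_poly E P hPE hPd
  obtain ⟨Pt, hPt⟩ := hall P hPE
  obtain ⟨Qt, hQt⟩ := hall Q ((hE Q).mpr hQ)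
  refine ⟨Pt, Qt, W, hPt, hQt, ?_⟩
  have hWE := (hE W).mp hW
  have hc : ∀ φ : PowerSeries ℂ, PowerSeries.constantCoeff (aeval φ W) =
      W.eval (PowerSeries.constantCoeff φ) := fun φ => by
    have h := hom_eval₂ W (algebraMap ℂ (PowerSeries ℂ)) PowerSeries.constantCoeff φ
    rw [aeval_def, h]
    have : PowerSeries.constantCoeff.comp (algebraMap ℂ (PowerSeries ℂ)) = RingHom.id ℂ := by
      ext; simp
    rw [this, eval₂_id]
  rw [← hφa0, ← hφb0, ← hc, ← hc, hWE]

/-- Christopher's theorem (regular endpoints case of the polynomial moment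
problem): if `a, b` are not critical points of `P`, `P a = P b`, `a ≠ b`, and
all moments `∫_a^b P^i Q' dz` vanish, then `P = P̃ ∘ W`, `Q = Q̃ ∘ W` with
`W a = W b`. -/
theorem polynomial_moment_problem_regular_points
    (P Q : ℂ[X]) (a b : ℂ) (hab : a ≠ b) (hPab : P.eval a = P.eval b)
    (ha : P.derivative.eval a ≠ 0) (hb : P.derivative.eval b ≠ 0)
    (hmom : ∀ i : ℕ, ∀ R : ℂ[X],
      R.derivative = P ^ i * Q.derivative → R.eval a = R.eval b) :
    ∃ Pt Qt W : ℂ[X], P = Pt.comp W ∧ Q = Qt.comp W ∧ W.eval a = W.eval b := by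
  obtain ⟨J, hJ⟩ := pm_J a b
  have h1 : ∀ i, J (P ^ i * derivative Q) = 0 := by
    intro i
    obtain ⟨R, hR⟩ := pm_antideriv (P ^ i * derivative Q)
    rw [← hR, hJ, hmom i R hR, sub_self]
  have h2 : ∀ q : ℂ[X], J (q.comp P * derivative Q) = 0 := by
    intro q
    induction q using Polynomial.induction_on' with
    | add p q hp hq => rw [add_comp, add_mul, map_add, hp, hq, add_zero]
    | monomial n c =>
      rw [monomial_comp, mul_assoc, ← smul_eq_C_mul, map_smul, h1, smul_zero]
  set c := P.eval a with hc
  set P0 := P - C c with hP0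
  have hd : derivative P0 = derivative P := by simp [hP0]
  have hP0a : P0.eval a = 0 := by simp [hP0, hc]
  have hP0b : P0.eval b = 0 := by simp [hP0, hPab]
  have h3 : ∀ i : ℕ, J (P0 ^ i * derivative P0 * Q) = 0 := by
    intro i
    have e := hJ (P0 ^ (i + 1) * Q)
    rw [derivative_mul, map_add, derivative_pow_succ] at e
    have e1 : P0 ^ (i + 1) * derivative Q = ((X - C c) ^ (i + 1)).comp P * derivative Q := by
      simp [hP0]
    rw [e1, h2] at e
    simp only [eval_mul, eval_pow, hP0a, hP0b] at e
    have e2 : C ((i : ℂ) + 1) * P0 ^ i * derivative P0 * Q =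
        ((i : ℂ) + 1) • (P0 ^ i * derivative P0 * Q) := by
      rw [smul_eq_C_mul]; ring
    rw [e2, map_smul] at e
    have : (i : ℂ) + 1 ≠ 0 := by exact_mod_cast Nat.succ_ne_zero i
    simpa [this] using e
  obtain ⟨Pt, Qt, W, hPt, hQt, hW⟩ := pm_main0 P0 Q a b hP0a hP0b (by rwa [hd]) (by rwa [hd])
    J hJ h3
  refine ⟨Pt + C c, Qt, W, ?_, hQt, hW⟩
  rw [add_comp, C_comp, ← hPt, hP0]
  ring
end

section
/- Let P and Q be complex polynomials with P nonconstant, regarded as elements of ℂ(z) = RatFunc ℂ. Then the intermediate field ℂ(P,Q) generated by P and Q over ℂ is a proper subfield of ℂ(z) if and only if P and Q have a common right divisor of degree at least 2 in the composition algebra, i.e. if and only if there exist complex polynomials P̃, Q̃, W with deg W ≥ 2 such that P = P̃ ∘ W and Q = Q̃ ∘ W. -/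
open Polynomial IntermediateField

lemma ritt_ratio {w : RatFunc ℂ} (hw : Transcendental ℂ w) (x : RatFunc ℂ) (h : x ∈ ℂ⟮w⟯) :
    ∃ A B : ℂ[X], IsCoprime A B ∧ B ≠ 0 ∧ x * aeval w B = aeval w A := by
  obtain ⟨u, hu⟩ := (RatFunc.algEquivOfTranscendental w hw).surjective ⟨x, h⟩
  refine ⟨u.num, u.denom, u.isCoprime_num_denom, u.denom_ne_zero, ?_⟩
  have h1 := RatFunc.algEquivOfTranscendental_apply w hw u
  rw [hu] at h1
  simp only at h1
  rw [h1, div_mul_cancel₀]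
  intro h0
  exact hw ⟨_, u.denom_ne_zero, h0⟩

/-- An element lying in `R[y⁻¹]` is integral over `R`. -/
lemma ritt_integral (y : RatFunc ℂ) (hy : y ≠ 0) (S : ℂ[X][X]) (h : y = aeval y⁻¹ S) :
    IsIntegral ℂ[X] y := by
  refine ⟨X ^ (S.natDegree + 1) - S.reverse, ?_, ?_⟩
  · apply monic_X_pow_sub
    have h3 : S.reverse.degree ≤ (S.natDegree : WithBot ℕ) :=
      degree_le_natDegree.trans (by exact_mod_cast S.reverse_natDegree_le)
    first
      | exact h3
      | exact h3.trans_lt (by exact_mod_cast Nat.lt_succ_self _)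
  · let _ : Invertible y⁻¹ := invertibleOfNonzero (inv_ne_zero hy)
    have h2 := eval₂_reverse_mul_pow (algebraMap ℂ[X] (RatFunc ℂ)) y⁻¹ S
    rw [invOf_eq_inv, inv_inv] at h2
    rw [aeval_def] at h
    rw [← h] at h2
    have : eval₂ (algebraMap ℂ[X] (RatFunc ℂ)) y S.reverse = y ^ (S.natDegree + 1) := by
      have : y⁻¹ ^ S.natDegree ≠ 0 := pow_ne_zero _ (inv_ne_zero hy)
      apply mul_right_cancel₀ this
      rw [h2, pow_succ, inv_pow]
      field_simp
    simp [this]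

lemma ritt_poly_of_integral (y : RatFunc ℂ) (h : IsIntegral ℂ[X] y) :
    ∃ W : ℂ[X], algebraMap ℂ[X] (RatFunc ℂ) W = y :=
  IsIntegrallyClosed.isIntegral_iff.mp h

lemma ritt_alg_aeval (W A : ℂ[X]) :
    aeval (algebraMap ℂ[X] (RatFunc ℂ) W) A = algebraMap ℂ[X] (RatFunc ℂ) (A.comp W) := by
  rw [aeval_algebraMap_apply, comp_eq_aeval]

lemma ritt_finrank (W : ℂ[X]) :
    Module.finrank ℂ⟮algebraMap ℂ[X] (RatFunc ℂ) W⟯ (RatFunc ℂ) = W.natDegree := by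
  rw [RatFunc.finrank_eq_max_natDegree]
  simp

lemma ritt_transc (W : ℂ[X]) (hW : 1 ≤ W.natDegree) :
    Transcendental ℂ (algebraMap ℂ[X] (RatFunc ℂ) W) := by
  apply RatFunc.transcendental_of_ne_C
  rw [RatFunc.eq_C_iff]
  simp
  omega

/-- A polynomial in `ℂ(W)` is a polynomial in `W`. -/
lemma ritt_comp (W R : ℂ[X]) (hW : 1 ≤ W.natDegree)
    (h : algebraMap ℂ[X] (RatFunc ℂ) R ∈ ℂ⟮algebraMap ℂ[X] (RatFunc ℂ) W⟯) :
    ∃ A : ℂ[X], R = A.comp W := by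
  obtain ⟨A, B, ⟨u, v, huv⟩, hB, hAB⟩ := ritt_ratio (ritt_transc W hW) _ h
  rw [ritt_alg_aeval, ritt_alg_aeval, ← map_mul] at hAB
  replace hAB := RatFunc.algebraMap_injective ℂ hAB
  have h1 : B.comp W * (u.comp W * R + v.comp W) = 1 := by
    have := congrArg (fun p => p.comp W) huv
    simp only [add_comp, mul_comp, one_comp, ← hAB] at this
    linear_combination this
  have h2 := natDegree_eq_zero_of_isUnit (IsUnit.of_mul_eq_one _ h1)
  rw [natDegree_comp] at h2
  have h3 : B.natDegree = 0 := by
    rcases Nat.mul_eq_zero.mp h2 with h | h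
    · exact h
    · omega
  obtain ⟨b, rfl⟩ := natDegree_eq_zero.mp h3
  have hb : b ≠ 0 := by rintro rfl; simp at hB
  refine ⟨C b⁻¹ * A, ?_⟩
  rw [mul_comp, C_comp, ← hAB, C_comp, mul_left_comm, ← C_mul, inv_mul_cancel₀ hb]
  simp

/-- If `ℂ(w)` contains a nonconstant polynomial, it has a polynomial generator. -/
lemma ritt_gen (w : RatFunc ℂ) (hw : Transcendental ℂ w) (P : ℂ[X]) (hP : 1 ≤ P.natDegree)
    (h : algebraMap ℂ[X] (RatFunc ℂ) P ∈ ℂ⟮w⟯) :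
    ∃ W : ℂ[X], ℂ⟮w⟯ = ℂ⟮algebraMap ℂ[X] (RatFunc ℂ) W⟯ := by
  obtain ⟨A, B, ⟨u, v, huv⟩, hB, hAB⟩ := ritt_ratio hw _ h
  by_cases hB0 : B.natDegree = 0
  · obtain ⟨b, rfl⟩ := natDegree_eq_zero.mp hB0
    have hb : b ≠ 0 := by rintro rfl; simp at hB
    have hA0 : A.natDegree ≠ 0 := by
      intro hA0
      obtain ⟨a, rfl⟩ := natDegree_eq_zero.mp hA0
      have : algebraMap ℂ[X] (RatFunc ℂ) (P * C b) = algebraMap ℂ[X] (RatFunc ℂ) (C a) := by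
        simpa using hAB
      have := congrArg natDegree (RatFunc.algebraMap_injective ℂ this)
      rw [natDegree_mul_C hb, natDegree_C] at this
      omega
    have hA : A ≠ 0 := by rintro rfl; simp at hA0
    have hl : A.leadingCoeff ≠ 0 := leadingCoeff_ne_zero.mpr hA
    have hint : IsIntegral ℂ[X] w := by
      let p : ℂ[X][X] := (A * C A.leadingCoeff⁻¹).map (algebraMap ℂ ℂ[X])
      have hpm : p.Monic := (monic_mul_leadingCoeff_inv hA).map _
      refine IsIntegral.of_aeval_monic (p := p) hpm ?_ ?_
      · rw [Polynomial.Monic.natDegree_map (monic_mul_leadingCoeff_inv hA),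
          natDegree_mul_C (inv_ne_zero hl)]
        exact hA0
      · have : aeval w p = algebraMap ℂ[X] (RatFunc ℂ) (P * C b * C A.leadingCoeff⁻¹) := by
          rw [aeval_map_algebraMap, map_mul, ← hAB, map_mul, map_mul]
          simp
        rw [this]
        exact isIntegral_algebraMap
    obtain ⟨W, rfl⟩ := ritt_poly_of_integral w hint
    exact ⟨W, rfl⟩
  · obtain ⟨β, hβ⟩ := IsAlgClosed.exists_root B (fun h => hB0 (natDegree_eq_of_degree_eq_some h))
    obtain ⟨B', rfl⟩ := dvd_iff_isRoot.mpr hβ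
    set t : RatFunc ℂ := w - algebraMap ℂ (RatFunc ℂ) β with ht
    have ht0 : t ≠ 0 := by
      intro h0
      rw [ht, sub_eq_zero] at h0
      exact hw (h0 ▸ isAlgebraic_algebraMap β)
    have hkey : t * (aeval w B' * (aeval w u * algebraMap ℂ[X] (RatFunc ℂ) P + aeval w v)) = 1 := by
      have := congrArg (aeval w) huv
      simp only [map_add, map_mul, map_one, map_sub, aeval_X, aeval_C] at this hAB
      rw [← hAB] at this
      rw [ht]
      linear_combination this
    have hint : IsIntegral ℂ[X] t⁻¹ := by
      let i : ℂ →+* ℂ[X] := algebraMap ℂ ℂ[X]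
      let S : ℂ[X][X] := (B'.map i * (u.map i * C P + v.map i)).comp (X + C (C β))
      refine ritt_integral _ (inv_ne_zero ht0) S ?_
      have hS : aeval t S = aeval w B' * (aeval w u * algebraMap ℂ[X] (RatFunc ℂ) P + aeval w v) := by
        have hw' : aeval t (X + C (C β) : ℂ[X][X]) = w := by
          simp [ht]
        rw [aeval_comp, hw']
        simp only [i, map_mul, map_add, aeval_map_algebraMap, aeval_C]
      rw [inv_inv, hS]
      exact inv_eq_of_mul_eq_one_right hkey
    obtain ⟨W, hW⟩ := ritt_poly_of_integral _ hint
    refine ⟨W, ?_⟩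
    rw [hW]
    apply le_antisymm
    · rw [adjoin_simple_le_iff]
      have h1 := inv_mem (mem_adjoin_simple_self ℂ t⁻¹)
      rw [inv_inv] at h1
      have := add_mem h1 (ℂ⟮t⁻¹⟯.algebraMap_mem β)
      simpa [ht] using this
    · rw [adjoin_simple_le_iff]
      exact inv_mem (sub_mem (mem_adjoin_simple_self ℂ w) (ℂ⟮w⟯.algebraMap_mem β))

/-- Corollary 1 / Ritt's criterion (field form): for complex polynomials
`P, Q` with `P` nonconstant, `ℂ(P,Q)` is a proper subfield of `ℂ(z)` iff
`P` and `Q` have a common right divisor of degree at least 2 in the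
composition algebra. -/
theorem adjoin_pair_ne_top_iff_common_right_divisor
    (P Q : ℂ[X]) (hP : 1 ≤ P.natDegree) :
    IntermediateField.adjoin ℂ
        ({algebraMap ℂ[X] (RatFunc ℂ) P, algebraMap ℂ[X] (RatFunc ℂ) Q} : Set (RatFunc ℂ)) ≠ ⊤ ↔
      ∃ Pt Qt W : ℂ[X], 2 ≤ W.natDegree ∧ P = Pt.comp W ∧ Q = Qt.comp W := by
  have htop : Module.finrank (⊤ : IntermediateField ℂ (RatFunc ℂ)) (RatFunc ℂ) = 1 := by
    exact IntermediateField.finrank_top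
  constructor
  · intro hne
    set E := IntermediateField.adjoin ℂ
        ({algebraMap ℂ[X] (RatFunc ℂ) P, algebraMap ℂ[X] (RatFunc ℂ) Q} : Set (RatFunc ℂ)) with hE
    have hPE : algebraMap ℂ[X] (RatFunc ℂ) P ∈ E := subset_adjoin _ _ (by simp)
    have hQE : algebraMap ℂ[X] (RatFunc ℂ) Q ∈ E := subset_adjoin _ _ (by simp)
    have hbot : E ≠ ⊥ := by
      intro h0
      rw [h0, mem_bot] at hPE
      obtain ⟨c, hc⟩ := hPE
      exact ritt_transc P hP (hc ▸ isAlgebraic_algebraMap c)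
    have hgen : E = ℂ⟮RatFunc.Luroth.generator E⟯ := RatFunc.Luroth.eq_adjoin_generator
    obtain ⟨W, hW⟩ := ritt_gen _ (RatFunc.Luroth.transcendental_generator hbot) P hP
      (hgen ▸ hPE)
    rw [← hgen] at hW
    have hW0 : W.natDegree ≠ 0 := by
      intro h0
      obtain ⟨c, rfl⟩ := natDegree_eq_zero.mp h0
      apply hbot
      rw [hW, adjoin_simple_eq_bot_iff, mem_bot]
      exact ⟨c, by simp⟩
    have hW1 : W.natDegree ≠ 1 := by
      intro h1
      apply hne
      rw [← ritt_finrank, ← hW] at h1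
      rwa [finrank_eq_one_iff_eq_top] at h1
    rw [hW] at hPE hQE
    obtain ⟨Pt, hPt⟩ := ritt_comp W P (by omega) hPE
    obtain ⟨Qt, hQt⟩ := ritt_comp W Q (by omega) hQE
    exact ⟨Pt, Qt, W, by omega, hPt, hQt⟩
  · rintro ⟨Pt, Qt, W, hW, hP', hQ'⟩ h
    have hmem : ∀ A : ℂ[X], algebraMap ℂ[X] (RatFunc ℂ) (A.comp W) ∈
        ℂ⟮algebraMap ℂ[X] (RatFunc ℂ) W⟯ := by
      intro A
      rw [← ritt_alg_aeval]
      exact (mem_adjoin_simple_iff _ _).mpr ⟨A, 1, by simp⟩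
    have hle : (⊤ : IntermediateField ℂ (RatFunc ℂ)) ≤ ℂ⟮algebraMap ℂ[X] (RatFunc ℂ) W⟯ := by
      rw [← h, adjoin_le_iff]
      rintro x (rfl | rfl)
      · rw [hP']; exact hmem _
      · rw [hQ']; exact hmem _
    have h1 := ritt_finrank W
    rw [top_le_iff.mp hle, htop] at h1
    omega
end
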